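/- arXiv:2504.07225 — 6 statements merged into one kernel-verified Lean document; each statement's English description precedes it below -/
import Mathlib

section
/- Let K ∈ ℤ_{≥0} ∪ {∞}, let U ⊆ ℝ^N be open, μ0 ∈ U, and let a, b, η, λ ∈ C^K(U) satisfy b(μ) > 0 and λ(μ) > 0 for every μ ∈ U; set λ^0 = λ(μ0). If L ∈ (λ^0, 2λ^0), then for every ψ ∈ 𝓕^K_L(μ0) there exists φ ∈ 𝓕^K_L(μ0) such that, for all μ in a neighborhood of μ0 and all s > 0 small enough that |a(μ)·s^{λ(μ)}/b(μ)| < 1, one has (b(μ) + a(μ)·s^{λ(μ)} + ψ(s;μ))^{η(μ)} = b(μ)^{η(μ)} + η(μ)·b(μ)^{η(μ)−1}·a(μ)·s^{λ(μ)} + φ(s;μ). -/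
/-!
Write `u = a s^λ + ψ` and `v = u / b`. Then `(b + u)^η = b^η (1 + v)^η`, and the remainder is
`φ = b^η ((1 + v)^η - 1 - η v) + η b^(η-1) ψ`.
Since `s^λ` is flat of every order below `λ(μ0)` (`Flat.fst_rpow_lam`) and `L / 2 < λ(μ0)`, both
`u` and `v` are flat of order `L / 2`. The expression `(1 + v)^η - 1 - η v` is of second order in
`v`, hence flat of order `L` (`Flat.one_add_rpow_sub`). To differentiate it conveniently, put
`h = log (1 + v) - v` and `w = η (v + h)`, so that it equals `(exp w - 1 - w) + η h`. The
derivatives of `h` and of `exp w - 1 - w` are `-(v / (1 + v)) v'` and `(exp w - 1) w'`, products of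
two flat factors, so flatness follows by induction on the order of differentiation.

The induction uses the recursive predicate `Flat`, which bounds iterated partial derivatives taken
in arbitrary order and is stable under sums, products and composition. By symmetry of second
derivatives it agrees, for functions of class `C^n`, with the bounds in `MemF` (`MemF.flat`,
`memF_of_flat`).

`MemF` also asks for `C^K` regularity over the whole of `U`, where the base `b + u` may vanish far
from `μ0`; the remainder is therefore multiplied by a smooth cutoff in `μ` equal to `1` near `μ0`.
-/

open Topology Filter Set

/-- Partial derivative with respect to `s`. -/
noncomputable def dS {N : ℕ} (ψ : ℝ → (Fin N → ℝ) → ℝ) : ℝ → (Fin N → ℝ) → ℝ :=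
  fun s μ => deriv (fun t => ψ t μ) s

/-- Partial derivative with respect to the `i`-th component of `μ`. -/
noncomputable def dMu {N : ℕ} (i : Fin N) (ψ : ℝ → (Fin N → ℝ) → ℝ) : ℝ → (Fin N → ℝ) → ℝ :=
  fun s μ => fderiv ℝ (fun m => ψ s m) μ (Pi.single i 1)

/-- Mixed partial derivative `∂^{|ν|}ψ/(∂s^{ν0} ∂μ1^{ν1} ⋯ ∂μN^{νN})`. -/
noncomputable def mixedDeriv {N : ℕ} (ν0 : ℕ) (ν : Fin N → ℕ) (ψ : ℝ → (Fin N → ℝ) → ℝ) :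
    ℝ → (Fin N → ℝ) → ℝ :=
  (dS (N := N))^[ν0] ((List.finRange N).foldr (fun i φ => (dMu i)^[ν i] φ) ψ)

/-- ψ ∈ 𝓕^K_L(μ0): the class of (L,K)-flat functions with respect to s at μ0. -/
def MemF {N : ℕ} (K : ℕ∞) (L : ℝ) (U : Set (Fin N → ℝ)) (μ0 : Fin N → ℝ)
    (ψ : ℝ → (Fin N → ℝ) → ℝ) : Prop :=
  (∃ ε > 0, ContDiffOn ℝ K (fun p : ℝ × (Fin N → ℝ) => ψ p.1 p.2) ((Set.Ioo 0 ε) ×ˢ U)) ∧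
  ∀ ν0 : ℕ, ∀ ν : Fin N → ℕ, (↑(ν0 + ∑ i, ν i) : ℕ∞) ≤ K →
    ∃ V ⊆ U, V ∈ 𝓝 μ0 ∧ ∃ C > 0, ∃ s0 > 0, ∀ μ ∈ V, ∀ s ∈ Set.Ioo (0:ℝ) s0,
      |mixedDeriv ν0 ν ψ s μ| ≤ C * s ^ (L - (ν0 : ℝ))

/-- ψ ∈ 𝓕^K_L(W) = ⋂_{μ0 ∈ W} 𝓕^K_L(μ0). -/
def MemFSet {N : ℕ} (K : ℕ∞) (L : ℝ) (U : Set (Fin N → ℝ)) (W : Set (Fin N → ℝ))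
    (ψ : ℝ → (Fin N → ℝ) → ℝ) : Prop :=
  ∀ μ0 ∈ W, MemF K L U μ0 ψ

/-- The Écalle–Roussarie compensator. -/
noncomputable def omegaComp (s α : ℝ) : ℝ :=
  if α = 0 then -Real.log s else (s ^ (-α) - 1) / α

/-- `Λ_{i,k}(μ) = ∏_{j=i+1}^{k} λ_j(μ)` (1-based), here with 0-based index family. -/
noncomputable def LamProd {N n : ℕ} (lam : Fin n → (Fin N → ℝ) → ℝ) (i k : ℕ)
    (μ : Fin N → ℝ) : ℝ :=
  ∏ j ∈ Finset.univ.filter (fun j : Fin n => i ≤ (j : ℕ) ∧ (j : ℕ) < k), lam j μ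

/-- `A_{a+1,k}(μ) = ∏_{i=a+1}^{k} Δ_i(μ)^{Λ_{i,k}(μ)}` (1-based), 0-based lower bound `a`. -/
noncomputable def Acoef {N n : ℕ} (lam Δ : Fin n → (Fin N → ℝ) → ℝ) (a k : ℕ)
    (μ : Fin N → ℝ) : ℝ :=
  ∏ i ∈ Finset.univ.filter (fun i : Fin n => a ≤ (i : ℕ) ∧ (i : ℕ) < k),
    (Δ i μ) ^ (LamProd lam ((i : ℕ) + 1) k μ)

/-- Composition `D_n ∘ ⋯ ∘ D_1` (0-based: `D (n-1) ∘ ⋯ ∘ D 0`). -/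
noncomputable def iterComp {N n : ℕ} (D : Fin n → ℝ → (Fin N → ℝ) → ℝ) :
    ℝ → (Fin N → ℝ) → ℝ :=
  fun s μ => (List.finRange n).foldl (fun t i => D i t μ) s

/-! ### Directional derivatives and the filter of approach -/

open Asymptotics

/-- The filter along which flatness is measured: `s → 0⁺` and `μ → μ0`, independently. -/
def approach {N : ℕ} (μ0 : Fin N → ℝ) : Filter (ℝ × (Fin N → ℝ)) := 𝓝[>] (0 : ℝ) ×ˢ 𝓝 μ0

/-- The coordinate directions of `ℝ × ℝ^N`: `none` stands for `s`, `some i` for `μ_i`. -/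
def coordVec {N : ℕ} : Option (Fin N) → ℝ × (Fin N → ℝ)
  | none => (1, 0)
  | some i => (0, Pi.single i 1)

/-- The loss in the exponent of `s` caused by one derivative in the given direction. -/
def weight {N : ℕ} : Option (Fin N) → ℝ
  | none => 1
  | some _ => 0

/-- Partial derivative of a function of the pair `(s, μ)`, taken from the total derivative. -/
noncomputable def pd {N : ℕ} (j : Option (Fin N)) (f : ℝ × (Fin N → ℝ) → ℝ) :
    ℝ × (Fin N → ℝ) → ℝ :=
  fun p => fderiv ℝ f p (coordVec j)

/-- `f` and all its partial derivatives of order at most `n`, in any order of differentiation,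
satisfy the bounds of order `s ^ (L - ν0)`; below order `n` they are differentiable near the
approach region. -/
def Flat {N : ℕ} (μ0 : Fin N → ℝ) : ℕ → ℝ → (ℝ × (Fin N → ℝ) → ℝ) → Prop
  | 0, L, f => f =O[approach μ0] fun p => p.1 ^ L
  | n + 1, L, f => (f =O[approach μ0] fun p => p.1 ^ L) ∧
      (∀ᶠ p in approach μ0, DifferentiableAt ℝ f p) ∧
      ∀ j, Flat μ0 n (L - weight j) (pd j f)

theorem eventually_eventually_approach {N : ℕ} {μ0 : Fin N → ℝ} {P : ℝ × (Fin N → ℝ) → Prop}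
    (h : ∀ᶠ p in approach μ0, P p) : ∀ᶠ p in approach μ0, ∀ᶠ q in 𝓝 p, P q := by
  obtain ⟨pa, ha, pb, hb, hab⟩ := eventually_prod_iff.1 h
  rw [approach, eventually_prod_iff]
  refine ⟨_, eventually_eventually_nhdsWithin.2 ha |>.and self_mem_nhdsWithin,
    _, eventually_eventually_nhds.2 hb, ?_⟩
  rintro s ⟨hs, hs0⟩ μ hμ
  rw [nhdsWithin_eq_nhds.2 (Ioi_mem_nhds hs0)] at hs
  rw [nhds_prod_eq, eventually_prod_iff]
  exact ⟨_, hs, _, hμ, fun h1 _ h2 => hab h1 h2⟩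

theorem approach_pos {N : ℕ} (μ0 : Fin N → ℝ) : ∀ᶠ p in approach μ0, 0 < p.1 :=
  tendsto_fst.eventually (self_mem_nhdsWithin : Ioi (0 : ℝ) ∈ 𝓝[>] 0)

theorem approach_lt_one {N : ℕ} (μ0 : Fin N → ℝ) : ∀ᶠ p in approach μ0, p.1 < 1 :=
  tendsto_fst.eventually (mem_nhdsWithin_of_mem_nhds (Iio_mem_nhds one_pos))

theorem approach_snd {N : ℕ} {μ0 : Fin N → ℝ} {P : (Fin N → ℝ) → Prop}
    (h : ∀ᶠ μ in 𝓝 μ0, P μ) : ∀ᶠ p in approach μ0, P p.2 :=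
  tendsto_snd.eventually h

theorem pd_congr {N : ℕ} {μ0 : Fin N → ℝ} {f g : ℝ × (Fin N → ℝ) → ℝ}
    (h : f =ᶠ[approach μ0] g) (j : Option (Fin N)) : pd j f =ᶠ[approach μ0] pd j g := by
  filter_upwards [eventually_eventually_approach h] with p hp
  have : f =ᶠ[𝓝 p] g := hp
  simp only [pd, this.fderiv_eq]

theorem isBigO_rpow_approach {N : ℕ} (μ0 : Fin N → ℝ) {L M : ℝ} (h : M ≤ L) :
    (fun p : ℝ × (Fin N → ℝ) => p.1 ^ L) =O[approach μ0] fun p => p.1 ^ M := by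
  refine IsBigO.of_bound 1 ?_
  filter_upwards [approach_pos μ0, approach_lt_one μ0] with p h0 h1
  rw [one_mul, Real.norm_of_nonneg (by positivity), Real.norm_of_nonneg (by positivity)]
  exact Real.rpow_le_rpow_of_exponent_ge h0 h1.le h

/-! ### Closure properties of flatness -/

namespace Flat

variable {N : ℕ} {μ0 : Fin N → ℝ} {n : ℕ} {L M P : ℝ} {f g : ℝ × (Fin N → ℝ) → ℝ}

theorem isBigO (h : Flat μ0 n L f) : f =O[approach μ0] fun p => p.1 ^ L := by
  cases n with
  | zero => exact h
  | succ n => exact h.1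

theorem congr (h : Flat μ0 n L f) (hfg : f =ᶠ[approach μ0] g) : Flat μ0 n L g := by
  induction n generalizing L f g with
  | zero => exact IsBigO.congr' h hfg .rfl
  | succ n ih =>
    refine ⟨IsBigO.congr' h.1 hfg .rfl, ?_, fun j => ih (h.2.2 j) (pd_congr hfg j)⟩
    filter_upwards [eventually_eventually_approach hfg, h.2.1] with p hp hd
    exact hd.congr_of_eventuallyEq (EventuallyEq.symm hp)

theorem mono (h : Flat μ0 n L f) (hM : M ≤ L) : Flat μ0 n M f := by
  induction n generalizing L M f with
  | zero => exact IsBigO.trans h (isBigO_rpow_approach μ0 hM)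
  | succ n ih =>
    exact ⟨h.1.trans (isBigO_rpow_approach μ0 hM), h.2.1,
      fun j => ih (h.2.2 j) (by linarith)⟩

theorem of_succ (h : Flat μ0 (n + 1) L f) : Flat μ0 n L f := by
  induction n generalizing L f with
  | zero => exact h.1
  | succ n ih => exact ⟨h.1, h.2.1, fun j => ih (h.2.2 j)⟩

theorem zero (n : ℕ) (L : ℝ) : Flat μ0 n L (fun _ => 0) := by
  induction n generalizing L with
  | zero => exact isBigO_zero _ _
  | succ n ih =>
    refine ⟨isBigO_zero _ _, .of_forall fun p => differentiableAt_const _, fun j => ?_⟩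
    refine (ih _).congr (.of_forall fun p => ?_)
    simp [pd]

theorem add (hf : Flat μ0 n L f) (hg : Flat μ0 n L g) : Flat μ0 n L (fun p => f p + g p) := by
  induction n generalizing L f g with
  | zero => exact IsBigO.add hf hg
  | succ n ih =>
    refine ⟨hf.1.add hg.1, ?_, fun j => (ih (hf.2.2 j) (hg.2.2 j)).congr ?_⟩
    · filter_upwards [hf.2.1, hg.2.1] with p h1 h2 using h1.add h2
    · filter_upwards [hf.2.1, hg.2.1] with p h1 h2
      simp [pd, fderiv_fun_add h1 h2]

theorem mul (hf : Flat μ0 n L f) (hg : Flat μ0 n M g) :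
    Flat μ0 n (L + M) (fun p => f p * g p) := by
  have bound {f g : ℝ × (Fin N → ℝ) → ℝ} {L M : ℝ} (hf : f =O[approach μ0] fun p => p.1 ^ L)
      (hg : g =O[approach μ0] fun p => p.1 ^ M) :
      (fun p => f p * g p) =O[approach μ0] fun p => p.1 ^ (L + M) := by
    refine (hf.mul hg).congr' .rfl ?_
    filter_upwards [approach_pos μ0] with p hp
    rw [Real.rpow_add hp]
  induction n generalizing L M f g with
  | zero => exact bound hf hg
  | succ n ih =>
    refine ⟨bound hf.1 hg.1, ?_, fun j => ?_⟩
    · filter_upwards [hf.2.1, hg.2.1] with p h1 h2 using h1.mul h2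
    · have h1 := (ih hf.of_succ (hg.2.2 j)).mono (M := L + M - weight j) (by linarith)
      have h2 := (ih hg.of_succ (hf.2.2 j)).mono (M := L + M - weight j) (by linarith)
      refine (h1.add h2).congr ?_
      filter_upwards [hf.2.1, hg.2.1] with p h1 h2
      simp [pd, fderiv_fun_mul h1 h2]

/-- Functions of `μ` alone of class `C^n` lose nothing under differentiation. -/
theorem of_snd {a : (Fin N → ℝ) → ℝ} (ha : ∀ᶠ μ in 𝓝 μ0, ContDiffAt ℝ n a μ) :
    Flat μ0 n 0 (fun p => a p.2) := by
  have bound {n : ℕ} {a : (Fin N → ℝ) → ℝ} (ha : ∀ᶠ μ in 𝓝 μ0, ContDiffAt ℝ n a μ) :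
      (fun p : ℝ × (Fin N → ℝ) => a p.2) =O[approach μ0] fun p => p.1 ^ (0 : ℝ) := by
    have h : a =O[𝓝 μ0] (fun _ => (1 : ℝ)) :=
      (ha.self_of_nhds.continuousAt.tendsto).isBigO_one ℝ
    simp only [Real.rpow_zero]
    exact h.comp_tendsto (tendsto_snd : Tendsto Prod.snd (approach μ0) _)
  induction n generalizing a with
  | zero => exact bound ha
  | succ n ih =>
    have hdiff : ∀ᶠ p : ℝ × (Fin N → ℝ) in approach μ0, DifferentiableAt ℝ a p.2 :=
      approach_snd (ha.mono fun μ h => h.differentiableAt (by simp))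
    have hd : ∀ᶠ p : ℝ × (Fin N → ℝ) in approach μ0,
        HasFDerivAt (fun p : ℝ × (Fin N → ℝ) => a p.2)
          ((fderiv ℝ a p.2).comp (ContinuousLinearMap.snd ℝ ℝ (Fin N → ℝ))) p := by
      filter_upwards [hdiff] with p hp
      exact hp.hasFDerivAt.comp p hasFDerivAt_snd
    refine ⟨bound ha, hd.mono fun p h => h.differentiableAt, fun j => ?_⟩
    cases j with
    | none =>
      refine (zero n _).congr ?_
      filter_upwards [hd] with p hp
      simp [pd, hp.fderiv, coordVec]
    | some i =>
      have h1 : ∀ᶠ μ in 𝓝 μ0, ContDiffAt ℝ n (fun μ => fderiv ℝ a μ (Pi.single i 1)) μ := by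
        filter_upwards [ha] with μ h
        exact (h.fderiv_right (m := n) (by norm_cast)).clm_apply contDiffAt_const
      simp only [weight, sub_zero]
      refine (ih h1).congr ?_
      filter_upwards [hd] with p hp
      simp [pd, hp.fderiv, coordVec]

theorem const (c : ℝ) : Flat μ0 n 0 (fun _ => c) :=
  of_snd (.of_forall fun _ => contDiffAt_const)

theorem neg (hf : Flat μ0 n L f) : Flat μ0 n L (fun p => - f p) := by
  simpa using (const (-1)).mul hf

theorem sub (hf : Flat μ0 n L f) (hg : Flat μ0 n L g) : Flat μ0 n L (fun p => f p - g p) := by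
  simpa [sub_eq_add_neg] using hf.add hg.neg

/-- The chain rule step: the exponents of `φ' ∘ f` and of the derivatives of `f` add up. -/
theorem comp_succ {φ φ' : ℝ → ℝ} (hf : Flat μ0 (n + 1) M f)
    (hφ : ∀ᶠ p in approach μ0, HasDerivAt φ (φ' (f p)) (f p))
    (hb : (fun p => φ (f p)) =O[approach μ0] fun p => p.1 ^ L)
    (h' : Flat μ0 n P (fun p => φ' (f p))) (hL : L ≤ P + M) :
    Flat μ0 (n + 1) L (fun p => φ (f p)) := by
  have hd : ∀ᶠ p in approach μ0,
      HasFDerivAt (fun p => φ (f p)) (φ' (f p) • fderiv ℝ f p) p := by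
    filter_upwards [hφ, hf.2.1] with p h1 h2
    exact h1.comp_hasFDerivAt p h2.hasFDerivAt
  refine ⟨hb, hd.mono fun p h => h.differentiableAt, fun j => ?_⟩
  refine ((h'.mul (hf.2.2 j)).mono (by linarith)).congr ?_
  filter_upwards [hd] with p hp
  simp [pd, hp.fderiv]

theorem tendsto_zero (hf : Flat μ0 n M f) (hM : 0 < M) : Tendsto f (approach μ0) (𝓝 0) := by
  refine hf.isBigO.trans_tendsto ?_
  have h : Tendsto (fun s : ℝ => s ^ M) (𝓝[>] 0) (𝓝 0) := by
    have := (Real.continuousAt_rpow_const 0 M (Or.inr hM.le)).tendsto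
    rw [Real.zero_rpow hM.ne'] at this
    exact this.mono_left nhdsWithin_le_nhds
  exact h.comp tendsto_fst

theorem isBigO_sq (hf : Flat μ0 n M f) :
    (fun p => f p ^ 2) =O[approach μ0] fun p => p.1 ^ (2 * M) := by
  refine (hf.isBigO.pow 2).congr' .rfl ?_
  filter_upwards [approach_pos μ0] with p hp
  rw [mul_comm, Real.rpow_mul hp.le]; norm_cast

/-! ### Powers and logarithms of the variable `s` -/

theorem fst : Flat μ0 n 1 (fun p => p.1) := by
  have hb : (fun p : ℝ × (Fin N → ℝ) => p.1) =O[approach μ0] fun p => p.1 ^ (1 : ℝ) := by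
    simpa using isBigO_refl _ _
  cases n with
  | zero => exact hb
  | succ n =>
    refine ⟨hb, .of_forall fun p => differentiableAt_fst, fun j => ?_⟩
    cases j with
    | none =>
      simp only [weight, sub_self]
      refine (const 1).congr (.of_forall fun p => ?_)
      simp [pd, coordVec, fderiv_fst]
    | some i =>
      refine (zero n _).congr (.of_forall fun p => ?_)
      simp [pd, coordVec, fderiv_fst]

theorem fst_rpow (c : ℝ) : Flat μ0 n c (fun p => p.1 ^ c) := by
  induction n generalizing c with
  | zero => exact isBigO_refl _ _
  | succ n ih =>
    refine comp_succ (φ := fun x => x ^ c) (φ' := fun x => c * x ^ (c - 1)) (P := 0 + (c - 1))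
      fst ?_ (isBigO_refl _ _) ((const c).mul (ih (c - 1))) (by linarith)
    filter_upwards [approach_pos μ0] with p hp
    exact Real.hasDerivAt_rpow_const (Or.inl hp.ne')

theorem log_fst {δ : ℝ} (hδ : 0 < δ) : Flat μ0 n (-δ) (fun p => Real.log p.1) := by
  have hb : (fun p : ℝ × (Fin N → ℝ) => Real.log p.1) =O[approach μ0] fun p => p.1 ^ (-δ) :=
    (isLittleO_log_rpow_nhdsGT_zero (neg_lt_zero.2 hδ)).isBigO.comp_tendsto
      (tendsto_fst : Tendsto Prod.fst (approach μ0) _)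
  cases n with
  | zero => exact hb
  | succ n =>
    refine comp_succ (φ' := fun x => x ^ (-1 : ℝ)) (P := -1) fst ?_ hb (fst_rpow (-1))
      (by linarith)
    filter_upwards [approach_pos μ0] with p hp
    rw [Real.rpow_neg_one]
    exact Real.hasDerivAt_log hp.ne'

/-- `s ^ λ(μ)` is flat of every order below `λ(μ0)`: each `μ`-derivative costs a factor `log s`,
and the variation of `λ` near `μ0` an arbitrarily small power of `s`. -/
theorem fst_rpow_lam {lam : (Fin N → ℝ) → ℝ} (hlam : ∀ᶠ μ in 𝓝 μ0, ContDiffAt ℝ n lam μ)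
    (hM : M < lam μ0) : Flat μ0 n M (fun p => p.1 ^ lam p.2) := by
  have hexp : (fun p : ℝ × (Fin N → ℝ) => p.1 ^ lam p.2) =ᶠ[approach μ0]
      fun p => Real.exp (lam p.2 * Real.log p.1) := by
    filter_upwards [approach_pos μ0] with p hp
    rw [Real.rpow_def_of_pos hp, mul_comm]
  have hb {M : ℝ} (hM : M < lam μ0) :
      (fun p : ℝ × (Fin N → ℝ) => p.1 ^ lam p.2) =O[approach μ0] fun p => p.1 ^ M := by
    refine IsBigO.of_bound 1 ?_
    filter_upwards [approach_pos μ0, approach_lt_one μ0, approach_snd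
      (hlam.self_of_nhds.continuousAt.tendsto.eventually (lt_mem_nhds hM))] with p h0 h1 h2
    rw [one_mul, Real.norm_of_nonneg (by positivity), Real.norm_of_nonneg (by positivity)]
    exact Real.rpow_le_rpow_of_exponent_ge h0 h1.le h2.le
  induction n generalizing M with
  | zero => exact hb hM
  | succ n ih =>
    obtain ⟨P, hP1, hP2⟩ := exists_between hM
    have hlog : Flat μ0 (n + 1) (0 + -(P - M)) (fun p => lam p.2 * Real.log p.1) :=
      (of_snd hlam).mul (log_fst (by linarith))
    have hlam' : ∀ᶠ μ in 𝓝 μ0, ContDiffAt ℝ n lam μ :=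
      hlam.mono fun μ h => h.of_le (by norm_cast; omega)
    refine (comp_succ (φ := Real.exp) (φ' := Real.exp) (P := P) hlog
      (.of_forall fun p => Real.hasDerivAt_exp _) ((hb hM).congr' hexp .rfl)
      ((ih hlam' hP2).congr hexp) (by linarith)).congr hexp.symm

/-! ### Second-order remainders of `log (1 + v)` and `exp w` -/

theorem eventually_small (hf : Flat μ0 n M f) (hM : 0 < M) :
    ∀ᶠ p in approach μ0, |f p| < 1 / 2 := by
  have := (hf.tendsto_zero hM).abs
  rw [abs_zero] at this
  exact this.eventually (gt_mem_nhds (by norm_num))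

theorem inv_one_add (hf : Flat μ0 n M f) (hM : 0 < M) :
    Flat μ0 n 0 (fun p => (1 + f p)⁻¹) := by
  have hb : (fun p => (1 + f p)⁻¹) =O[approach μ0] fun p => p.1 ^ (0 : ℝ) := by
    have h1 : Tendsto (fun p => (1 + f p)⁻¹) (approach μ0) (𝓝 (1 + 0)⁻¹) :=
      ((hf.tendsto_zero hM).const_add 1).inv₀ (by norm_num)
    simpa using h1.isBigO_one ℝ
  induction n with
  | zero => exact hb
  | succ n ih =>
    have hQ := ih hf.of_succ
    refine comp_succ (φ := fun x => (1 + x)⁻¹) (φ' := fun x => -((1 + x)⁻¹ * (1 + x)⁻¹))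
      (P := 0 + 0) hf ?_ hb (hQ.mul hQ).neg (by linarith)
    filter_upwards [hf.eventually_small hM] with p hp
    have : 1 + f p ≠ 0 := by rw [abs_lt] at hp; linarith
    refine (((hasDerivAt_id (f p)).const_add 1).fun_inv this).congr_deriv ?_
    simp only [id]
    field_simp

theorem log_one_add_sub (hf : Flat μ0 n M f) (hM : 0 < M) :
    Flat μ0 n (2 * M) (fun p => Real.log (1 + f p) - f p) := by
  have hb : (fun p => Real.log (1 + f p) - f p) =O[approach μ0] fun p => p.1 ^ (2 * M) := by
    refine IsBigO.trans (IsBigO.of_bound 2 ?_) hf.isBigO_sq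
    filter_upwards [hf.eventually_small hM] with p hp
    have h := Real.abs_log_sub_add_sum_range_le (x := -f p) (by rw [abs_neg]; linarith) 1
    simp only [Finset.range_one, Finset.sum_singleton, abs_neg, sub_neg_eq_add] at h
    norm_num at h
    rw [Real.norm_eq_abs, Real.norm_of_nonneg (by positivity), sub_eq_neg_add]
    refine h.trans ?_
    rw [div_le_iff₀ (by linarith)]
    nlinarith [sq_nonneg (f p)]
  cases n with
  | zero => exact hb
  | succ n =>
    refine comp_succ (φ := fun x => Real.log (1 + x) - x) (φ' := fun x => -(x * (1 + x)⁻¹))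
      (P := M + 0) hf ?_ hb (hf.of_succ.mul (hf.of_succ.inv_one_add hM)).neg (by linarith)
    filter_upwards [hf.eventually_small hM] with p hp
    have : 1 + f p ≠ 0 := by rw [abs_lt] at hp; linarith
    refine ((((hasDerivAt_id (f p)).const_add 1).log this).sub
      (hasDerivAt_id (f p))).congr_deriv ?_
    simp only [id]
    field_simp
    ring

theorem exp_sub_one (hf : Flat μ0 n M f) (hM : 0 < M) :
    Flat μ0 n M (fun p => Real.exp (f p) - 1) := by
  have hb : (fun p => Real.exp (f p) - 1) =O[approach μ0] fun p => p.1 ^ M := by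
    refine IsBigO.trans (IsBigO.of_bound 2 ?_) hf.isBigO
    filter_upwards [hf.eventually_small hM] with p hp
    exact Real.abs_exp_sub_one_le (by linarith)
  induction n with
  | zero => exact hb
  | succ n ih =>
    refine comp_succ (φ := fun x => Real.exp x - 1) (φ' := Real.exp) (P := 0) hf
      (.of_forall fun p => (Real.hasDerivAt_exp _).sub_const 1) hb ?_ (by linarith)
    simpa using ((ih hf.of_succ).mono hM.le).add (const 1)

theorem exp_sub_one_sub (hf : Flat μ0 n M f) (hM : 0 < M) :
    Flat μ0 n (2 * M) (fun p => Real.exp (f p) - 1 - f p) := by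
  have hb : (fun p => Real.exp (f p) - 1 - f p) =O[approach μ0] fun p => p.1 ^ (2 * M) := by
    refine IsBigO.trans (IsBigO.of_bound 1 ?_) hf.isBigO_sq
    filter_upwards [hf.eventually_small hM] with p hp
    rw [one_mul, Real.norm_of_nonneg (sq_nonneg _)]
    exact Real.abs_exp_sub_one_sub_id_le (by linarith)
  cases n with
  | zero => exact hb
  | succ n =>
    exact comp_succ (φ := fun x => Real.exp x - 1 - x) (φ' := fun x => Real.exp x - 1)
      (P := M) hf
      (.of_forall fun p => ((Real.hasDerivAt_exp _).sub_const 1).sub (hasDerivAt_id _)) hb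
      (hf.of_succ.exp_sub_one hM) (by linarith)

/-- `(1 + v) ^ η - 1 - η v` is of second order in `v`. -/
theorem one_add_rpow_sub {e : ℝ × (Fin N → ℝ) → ℝ} (hf : Flat μ0 n M f) (hM : 0 < M)
    (he : Flat μ0 n 0 e) :
    Flat μ0 n (2 * M) (fun p => (1 + f p) ^ e p - 1 - e p * f p) := by
  have hh : Flat μ0 n (2 * M) (fun p => e p * (Real.log (1 + f p) - f p)) := by
    simpa using he.mul (hf.log_one_add_sub hM)
  have hw : Flat μ0 n M (fun p => e p * f p + e p * (Real.log (1 + f p) - f p)) := by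
    have := he.mul hf
    rw [zero_add] at this
    exact this.add (hh.mono (by linarith))
  refine ((hw.exp_sub_one_sub hM).add hh).congr ?_
  filter_upwards [hf.eventually_small hM] with p hp
  have : 0 < 1 + f p := by rw [abs_lt] at hp; linarith
  rw [Real.rpow_def_of_pos this,
    show e p * f p + e p * (Real.log (1 + f p) - f p) = Real.log (1 + f p) * e p by ring]
  ring

end Flat

/-! ### Mixed partial derivatives as iterated directional derivatives -/

/-- The list of directions of a mixed derivative, outermost derivative first. -/
def directions {N : ℕ} (ν0 : ℕ) (ν : Fin N → ℕ) : List (Option (Fin N)) :=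
  List.replicate ν0 none ++ (List.finRange N).flatMap fun i => List.replicate (ν i) (some i)

/-- The curried partial derivatives `dS`, `dMu i` as one family. -/
noncomputable def curriedPd {N : ℕ} :
    Option (Fin N) → (ℝ → (Fin N → ℝ) → ℝ) → ℝ → (Fin N → ℝ) → ℝ
  | none => dS
  | some i => dMu i

theorem foldr_replicate_iterate {α β : Type*} (F : α → β → β) (a : α) (k : ℕ) (b : β) :
    (List.replicate k a).foldr F b = (F a)^[k] b := by
  induction k with
  | zero => rfl
  | succ k ih => rw [List.replicate_succ, List.foldr_cons, ih, Function.iterate_succ_apply']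

theorem mixedDeriv_eq_foldr {N : ℕ} (ν0 : ℕ) (ν : Fin N → ℕ) (ψ : ℝ → (Fin N → ℝ) → ℝ) :
    mixedDeriv ν0 ν ψ = (directions ν0 ν).foldr curriedPd ψ := by
  have h (l : List (Fin N)) : l.foldr (fun i φ => (dMu i)^[ν i] φ) ψ =
      (l.flatMap fun i => List.replicate (ν i) (some i)).foldr curriedPd ψ := by
    induction l with
    | nil => rfl
    | cons i l ih =>
      rw [List.foldr_cons, ih, List.flatMap_cons, List.foldr_append, foldr_replicate_iterate]
      rfl
  rw [mixedDeriv, directions, List.foldr_append, foldr_replicate_iterate, h]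
  rfl

theorem length_directions {N : ℕ} (ν0 : ℕ) (ν : Fin N → ℕ) :
    (directions ν0 ν).length = ν0 + ∑ i, ν i := by
  simp [directions, List.length_flatMap, Fin.sum_univ_def]

theorem count_none_directions {N : ℕ} (ν0 : ℕ) (ν : Fin N → ℕ) :
    (directions ν0 ν).count none = ν0 := by
  simp [directions, List.count_flatMap, Function.comp_def, List.count_replicate]

theorem count_some_directions {N : ℕ} (ν0 : ℕ) (ν : Fin N → ℕ) (i : Fin N) :
    (directions ν0 ν).count (some i) = ν i := by
  simp [directions, List.count_flatMap, Function.comp_def, List.count_replicate,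
    ← Fin.sum_univ_def]

theorem perm_directions {N : ℕ} (l : List (Option (Fin N))) :
    l.Perm (directions (l.count none) fun i => l.count (some i)) := by
  rw [List.perm_iff_count]
  rintro (_ | i)
  · rw [count_none_directions]
  · rw [count_some_directions]

theorem contDiffAt_pd {N : ℕ} {m n : ℕ} {f : ℝ × (Fin N → ℝ) → ℝ} {p : ℝ × (Fin N → ℝ)}
    (h : ContDiffAt ℝ n f p) (hm : m + 1 ≤ n) (j : Option (Fin N)) :
    ContDiffAt ℝ m (pd j f) p :=
  (h.fderiv_right (m := m) (by exact_mod_cast hm)).clm_apply contDiffAt_const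

theorem contDiffAt_foldr_pd {N : ℕ} {m n : ℕ} {f : ℝ × (Fin N → ℝ) → ℝ}
    {p : ℝ × (Fin N → ℝ)} (h : ContDiffAt ℝ n f p) (l : List (Option (Fin N)))
    (hm : m + l.length ≤ n) : ContDiffAt ℝ m (l.foldr pd f) p := by
  induction l generalizing m with
  | nil => exact h.of_le (by exact_mod_cast hm)
  | cons j l ih =>
    exact contDiffAt_pd (ih (m := m + 1) (by simp at hm; omega)) le_rfl j

/-- `dS` and `dMu i` are one-variable and slice derivatives; where the function is differentiable
in both variables jointly they are values of the total derivative. -/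
theorem curriedPd_eq_pd {N : ℕ} {ψ : ℝ → (Fin N → ℝ) → ℝ} {f : ℝ × (Fin N → ℝ) → ℝ}
    {p : ℝ × (Fin N → ℝ)} (hψ : ∀ᶠ q in 𝓝 p, ψ q.1 q.2 = f q) (hf : DifferentiableAt ℝ f p)
    (j : Option (Fin N)) : curriedPd j ψ p.1 p.2 = pd j f p := by
  obtain ⟨s, μ⟩ := p
  have hd : HasFDerivAt (fun q : ℝ × (Fin N → ℝ) => ψ q.1 q.2) (fderiv ℝ f (s, μ)) (s, μ) :=
    hf.hasFDerivAt.congr_of_eventuallyEq hψ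
  cases j with
  | none =>
    have h : HasDerivAt (fun t : ℝ => (t, μ)) ((1 : ℝ), (0 : Fin N → ℝ)) s :=
      (hasDerivAt_id s).prodMk (hasDerivAt_const s μ)
    exact (hd.comp_hasDerivAt (f := fun t : ℝ => (t, μ)) s h).deriv
  | some i =>
    have h : HasFDerivAt (fun m : Fin N → ℝ => (s, m))
        (ContinuousLinearMap.inr ℝ ℝ (Fin N → ℝ)) μ := hasFDerivAt_prodMk_right s μ
    have h2 := (hd.comp (f := fun m : Fin N → ℝ => (s, m)) μ h).fderiv
    have h3 := congrArg (fun T => T (Pi.single i 1)) h2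
    simpa [pd, coordVec, curriedPd, dMu, Function.comp_def] using h3

theorem mixedDeriv_eventuallyEq {N : ℕ} {μ0 : Fin N → ℝ} {n : ℕ} {ψ : ℝ → (Fin N → ℝ) → ℝ}
    (h : ∀ᶠ p in approach μ0, ContDiffAt ℝ n (fun p : ℝ × (Fin N → ℝ) => ψ p.1 p.2) p)
    {ν0 : ℕ} {ν : Fin N → ℕ} (hν : ν0 + ∑ i, ν i ≤ n) :
    ∀ᶠ p in approach μ0, mixedDeriv ν0 ν ψ p.1 p.2 =
      (directions ν0 ν).foldr pd (fun p : ℝ × (Fin N → ℝ) => ψ p.1 p.2) p := by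
  rw [← length_directions] at hν
  rw [mixedDeriv_eq_foldr]
  generalize directions ν0 ν = l at hν ⊢
  induction l with
  | nil => exact .of_forall fun p => rfl
  | cons j l ih =>
    simp only [List.length_cons] at hν
    filter_upwards [eventually_eventually_approach (ih (by omega)), h] with p hp hc
    exact curriedPd_eq_pd hp ((contDiffAt_foldr_pd (m := 1) hc l
      (by omega)).differentiableAt (by simp)) j

/-- Symmetry of second derivatives. -/
theorem pd_comm {N : ℕ} {f : ℝ × (Fin N → ℝ) → ℝ} {p : ℝ × (Fin N → ℝ)}
    (h : ContDiffAt ℝ 2 f p) (i j : Option (Fin N)) : pd i (pd j f) p = pd j (pd i f) p := by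
  have hd : DifferentiableAt ℝ (fderiv ℝ f) p :=
    (h.fderiv_right (m := 1) (by norm_num)).differentiableAt (by simp)
  have key (i j : Option (Fin N)) :
      pd i (pd j f) p = fderiv ℝ (fderiv ℝ f) p (coordVec i) (coordVec j) := by
    have := (hd.hasFDerivAt.clm_apply (hasFDerivAt_const (coordVec j) p)).fderiv
    unfold pd
    rw [this]
    simp
  rw [key, key]
  exact h.isSymmSndFDerivAt (by simp) _ _

/-- Near the approach region the order of differentiation is irrelevant. -/
theorem foldr_pd_perm {N : ℕ} {μ0 : Fin N → ℝ} {n : ℕ} {f : ℝ × (Fin N → ℝ) → ℝ}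
    (h : ∀ᶠ p in approach μ0, ContDiffAt ℝ n f p) {l l' : List (Option (Fin N))}
    (hl : l.Perm l') (hn : l.length ≤ n) :
    l.foldr pd f =ᶠ[approach μ0] l'.foldr pd f := by
  induction hl with
  | nil => exact .rfl
  | cons j _ ih => exact pd_congr (ih (by simp at hn; omega)) j
  | swap i j l =>
    filter_upwards [h] with p hp
    exact pd_comm (contDiffAt_foldr_pd (m := 2) hp l (by simp at hn; omega)) j i
  | trans h1 _ ih1 ih2 => exact (ih1 hn).trans (ih2 (h1.length_eq ▸ hn))

/-! ### Flatness and the class `MemF` -/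

theorem Flat.foldr_isBigO {N : ℕ} {μ0 : Fin N → ℝ} {n : ℕ} {L : ℝ}
    {f : ℝ × (Fin N → ℝ) → ℝ} (h : Flat μ0 n L f) (l : List (Option (Fin N)))
    (hl : l.length ≤ n) :
    l.foldr pd f =O[approach μ0] fun p => p.1 ^ (L - (l.count none : ℝ)) := by
  induction l using List.reverseRecOn generalizing n L f with
  | nil => simpa using h.isBigO
  | append_singleton l j ih =>
    obtain ⟨n, rfl⟩ : ∃ k, n = k + 1 := ⟨n - 1, by simp at hl; omega⟩
    have := ih (h.2.2 j) (by simpa using hl)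
    rw [List.foldr_append]
    refine this.congr_right fun p => ?_
    cases j <;> simp [weight, List.count_append, sub_sub, add_comm]

theorem flat_of_foldr {N : ℕ} {μ0 : Fin N → ℝ} {n : ℕ} {L : ℝ}
    {f : ℝ × (Fin N → ℝ) → ℝ} (hc : ∀ᶠ p in approach μ0, ContDiffAt ℝ n f p)
    (h : ∀ l : List (Option (Fin N)), l.length ≤ n →
      l.foldr pd f =O[approach μ0] fun p => p.1 ^ (L - (l.count none : ℝ))) :
    Flat μ0 n L f := by
  induction n generalizing L f with
  | zero =>
    have h0 := h [] (by simp)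
    simp only [List.count_nil, Nat.cast_zero, sub_zero] at h0
    exact h0
  | succ n ih =>
    refine ⟨by simpa using h [] (by simp), hc.mono fun p hp => hp.differentiableAt (by simp),
      fun j => ih (hc.mono fun p hp => contDiffAt_pd hp le_rfl j) fun l hl => ?_⟩
    have := h (l ++ [j]) (by simpa using hl)
    rw [List.foldr_append] at this
    refine this.congr_right fun p => ?_
    cases j <;> simp [weight, List.count_append, sub_sub, add_comm]

theorem isBigO_approach_iff {N : ℕ} {U : Set (Fin N → ℝ)} {μ0 : Fin N → ℝ} (hU : U ∈ 𝓝 μ0)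
    (f : ℝ → (Fin N → ℝ) → ℝ) (c : ℝ) :
    ((fun p : ℝ × (Fin N → ℝ) => f p.1 p.2) =O[approach μ0] fun p => p.1 ^ c) ↔
    ∃ V ⊆ U, V ∈ 𝓝 μ0 ∧ ∃ C > 0, ∃ s0 > 0, ∀ μ ∈ V, ∀ s ∈ Set.Ioo (0:ℝ) s0,
      |f s μ| ≤ C * s ^ c := by
  constructor
  · intro h
    obtain ⟨C, hC, h⟩ := h.exists_pos
    obtain ⟨A, hA, V, hV, hAV⟩ := mem_prod_iff.1 h.bound
    obtain ⟨s0, hs0, hs⟩ := mem_nhdsGT_iff_exists_Ioo_subset.1 hA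
    refine ⟨V ∩ U, inter_subset_right, inter_mem hV hU, C, hC, s0, hs0, fun μ hμ s hs' => ?_⟩
    have h1 : ‖f s μ‖ ≤ C * ‖s ^ c‖ := hAV (Set.mk_mem_prod (hs hs') hμ.1)
    rwa [Real.norm_eq_abs, Real.norm_of_nonneg (Real.rpow_nonneg hs'.1.le _)] at h1
  · rintro ⟨V, -, hV, C, -, s0, hs0, h⟩
    refine IsBigO.of_bound C ?_
    filter_upwards [prod_mem_prod (Ioo_mem_nhdsGT hs0) hV] with p hp
    rw [Real.norm_eq_abs, Real.norm_of_nonneg (Real.rpow_nonneg hp.1.1.le _)]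
    exact h _ hp.2 _ hp.1

theorem eventually_contDiffAt {N : ℕ} {U : Set (Fin N → ℝ)} (hU : IsOpen U) {μ0 : Fin N → ℝ}
    (hμ0 : μ0 ∈ U) {k : WithTop ℕ∞} {ε : ℝ} (hε : 0 < ε) {f : ℝ × (Fin N → ℝ) → ℝ}
    (hf : ContDiffOn ℝ k f (Ioo 0 ε ×ˢ U)) : ∀ᶠ p in approach μ0, ContDiffAt ℝ k f p := by
  filter_upwards [prod_mem_prod (Ioo_mem_nhdsGT hε) (hU.mem_nhds hμ0)] with p hp
  exact hf.contDiffAt ((isOpen_Ioo.prod hU).mem_nhds hp)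

theorem MemF.flat {N : ℕ} {K : ℕ∞} {L : ℝ} {U : Set (Fin N → ℝ)} (hU : IsOpen U)
    {μ0 : Fin N → ℝ} (hμ0 : μ0 ∈ U) {ψ : ℝ → (Fin N → ℝ) → ℝ} (h : MemF K L U μ0 ψ) {n : ℕ}
    (hn : (n : ℕ∞) ≤ K) : Flat μ0 n L (fun p => ψ p.1 p.2) := by
  obtain ⟨⟨ε, hε, hc⟩, hb⟩ := h
  have hc' : ∀ᶠ p in approach μ0, ContDiffAt ℝ n (fun p : ℝ × (Fin N → ℝ) => ψ p.1 p.2) p :=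
    (eventually_contDiffAt hU hμ0 hε hc).mono fun p hp => hp.of_le (by exact_mod_cast hn)
  refine flat_of_foldr hc' fun l hl => ?_
  have hlen : l.count none + ∑ i, l.count (some i) = l.length := by
    rw [(perm_directions l).length_eq, length_directions]
  have hbd := (isBigO_approach_iff (hU.mem_nhds hμ0) _ _).2 (hb (l.count none)
    (fun i => l.count (some i)) (le_trans (by rw [hlen]; exact_mod_cast hl) hn))
  refine hbd.congr' ?_ .rfl
  exact EventuallyEq.trans (mixedDeriv_eventuallyEq hc' (hlen.trans_le hl))
    (foldr_pd_perm hc' (perm_directions l) hl).symm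

theorem memF_of_flat {N : ℕ} {K : ℕ∞} {L : ℝ} {U : Set (Fin N → ℝ)} (hU : IsOpen U)
    {μ0 : Fin N → ℝ} (hμ0 : μ0 ∈ U) {ψ : ℝ → (Fin N → ℝ) → ℝ} {ε : ℝ} (hε : 0 < ε)
    (hc : ContDiffOn ℝ K (fun p : ℝ × (Fin N → ℝ) => ψ p.1 p.2) (Ioo 0 ε ×ˢ U))
    (h : ∀ n : ℕ, (n : ℕ∞) ≤ K → Flat μ0 n L (fun p => ψ p.1 p.2)) : MemF K L U μ0 ψ := by
  refine ⟨⟨ε, hε, hc⟩, fun ν0 ν hν => ?_⟩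
  rw [← isBigO_approach_iff (hU.mem_nhds hμ0)]
  have hc' : ∀ᶠ p in approach μ0, ContDiffAt ℝ (ν0 + ∑ i, ν i : ℕ)
      (fun p : ℝ × (Fin N → ℝ) => ψ p.1 p.2) p :=
    (eventually_contDiffAt hU hμ0 hε hc).mono fun p hp => hp.of_le (by exact_mod_cast hν)
  have hbd := (h _ hν).foldr_isBigO (directions ν0 ν) (length_directions ν0 ν).le
  rw [count_none_directions] at hbd
  exact hbd.congr' (EventuallyEq.symm (mixedDeriv_eventuallyEq hc' le_rfl)) .rfl

/-- Lemma 3.4: expansion of `(b + a s^λ + ψ)^η` for (L,K)-flat ψ. -/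
theorem flat_rpow_expansion {N : ℕ} (K : ℕ∞) (U : Set (Fin N → ℝ)) (hU : IsOpen U)
    (μ0 : Fin N → ℝ) (hμ0 : μ0 ∈ U)
    (a b η lam : (Fin N → ℝ) → ℝ)
    (ha : ContDiffOn ℝ K a U) (hb : ContDiffOn ℝ K b U)
    (hη : ContDiffOn ℝ K η U) (hlam : ContDiffOn ℝ K lam U)
    (hbpos : ∀ μ ∈ U, 0 < b μ) (hlampos : ∀ μ ∈ U, 0 < lam μ)
    (L : ℝ) (hL : L ∈ Set.Ioo (lam μ0) (2 * lam μ0))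
    (ψ : ℝ → (Fin N → ℝ) → ℝ) (hψ : MemF K L U μ0 ψ) :
    ∃ φ : ℝ → (Fin N → ℝ) → ℝ, MemF K L U μ0 φ ∧
      ∃ V ⊆ U, V ∈ 𝓝 μ0 ∧ ∃ s0 > 0, ∀ μ ∈ V, ∀ s ∈ Set.Ioo (0:ℝ) s0,
        |a μ * s ^ lam μ / b μ| < 1 →
          (b μ + a μ * s ^ lam μ + ψ s μ) ^ η μ
            = b μ ^ η μ + η μ * b μ ^ (η μ - 1) * (a μ * s ^ lam μ) + φ s μ := by
  have hUn : U ∈ 𝓝 μ0 := hU.mem_nhds hμ0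
  have hLpos : 0 < L := (hlampos μ0 hμ0).trans hL.1
  obtain ⟨ε, hε, hψc⟩ := hψ.1
  set φ₀ : ℝ × (Fin N → ℝ) → ℝ := fun p => (b p.2 + a p.2 * p.1 ^ lam p.2 + ψ p.1 p.2) ^ η p.2
    - b p.2 ^ η p.2 - η p.2 * b p.2 ^ (η p.2 - 1) * (a p.2 * p.1 ^ lam p.2) with hφ₀
  have hev {n : ℕ} (hn : (n : ℕ∞) ≤ K) {g : (Fin N → ℝ) → ℝ} (hg : ContDiffOn ℝ K g U) :
      ∀ᶠ μ in 𝓝 μ0, ContDiffAt ℝ n g μ := by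
    filter_upwards [hU.eventually_mem hμ0] with μ hμ
    exact (hg.contDiffAt (hU.mem_nhds hμ)).of_le (by exact_mod_cast hn)
  have hbinv : ContDiffOn ℝ K (fun μ => (b μ)⁻¹) U := hb.inv fun μ hμ => (hbpos μ hμ).ne'
  have hbη : ContDiffOn ℝ K (fun μ => b μ ^ η μ) U := fun μ hμ =>
    ((hb.contDiffAt (hU.mem_nhds hμ)).rpow (hη.contDiffAt (hU.mem_nhds hμ))
      (hbpos μ hμ).ne').contDiffWithinAt
  -- The relative perturbation `v = (a s^λ + ψ) / b` is flat of order `L / 2 < λ(μ0)`.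
  have hv {n : ℕ} (hn : (n : ℕ∞) ≤ K) : Flat μ0 n (L / 2)
      (fun p => (b p.2)⁻¹ * (a p.2 * p.1 ^ lam p.2 + ψ p.1 p.2)) := by
    have h1 := (Flat.of_snd (hev hn ha)).mul
      (Flat.fst_rpow_lam (M := L / 2) (hev hn hlam) (by linarith [hL.2]))
    rw [zero_add] at h1
    have h2 := (Flat.of_snd (hev hn hbinv)).mul
      (h1.add ((hψ.flat hU hμ0 hn).mono (M := L / 2) (by linarith)))
    rwa [zero_add] at h2
  have hflat {n : ℕ} (hn : (n : ℕ∞) ≤ K) : Flat μ0 n L φ₀ := by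
    have h1 := (Flat.of_snd (hev hn hbη)).mul
      ((hv hn).one_add_rpow_sub (by linarith) (Flat.of_snd (hev hn hη)))
    have h2 := (((Flat.of_snd (hev hn hη)).mul (Flat.of_snd (hev hn hbη))).mul
      (Flat.of_snd (hev hn hbinv))).mul (hψ.flat hU hμ0 hn)
    rw [show (0 : ℝ) + 2 * (L / 2) = L by ring] at h1
    rw [show (0 : ℝ) + 0 + 0 + L = L by ring] at h2
    refine (h1.add h2).congr ?_
    filter_upwards [(hv hn).eventually_small (by linarith),
      approach_snd (hU.eventually_mem hμ0)] with p hp hpU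
    have hbp := hbpos _ hpU
    have hpos : 0 ≤ 1 + (b p.2)⁻¹ * (a p.2 * p.1 ^ lam p.2 + ψ p.1 p.2) := by
      rw [abs_lt] at hp; linarith
    have hfac : b p.2 + a p.2 * p.1 ^ lam p.2 + ψ p.1 p.2 =
        b p.2 * (1 + (b p.2)⁻¹ * (a p.2 * p.1 ^ lam p.2 + ψ p.1 p.2)) := by
      field_simp; ring
    simp only [hφ₀]
    rw [hfac, Real.mul_rpow hbp.le hpos, Real.rpow_sub_one hbp.ne']
    field_simp
    ring
  -- On a product neighbourhood the base stays positive, so `φ₀` is of class `C^K` there.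
  have hbase : ∀ᶠ p in approach μ0, p.2 ∈ U ∧
      b p.2 + a p.2 * p.1 ^ lam p.2 + ψ p.1 p.2 ≠ 0 := by
    filter_upwards [(hv (n := 0) (by simp)).eventually_small (by linarith),
      approach_snd (hU.eventually_mem hμ0)] with p hp hpU
    refine ⟨hpU, ?_⟩
    have hbp := hbpos _ hpU
    have hfac : b p.2 + a p.2 * p.1 ^ lam p.2 + ψ p.1 p.2 =
        b p.2 * (1 + (b p.2)⁻¹ * (a p.2 * p.1 ^ lam p.2 + ψ p.1 p.2)) := by
      field_simp; ring
    rw [hfac]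
    rw [abs_lt] at hp
    exact mul_ne_zero hbp.ne' (by linarith)
  obtain ⟨A, hA, W, hW, hAW⟩ := mem_prod_iff.1 hbase
  obtain ⟨s1, hs1, hs1A⟩ := mem_nhdsGT_iff_exists_Ioo_subset.1 hA
  have hsmooth : ∀ s ∈ Ioo 0 (min ε s1), ∀ μ ∈ W, ContDiffAt ℝ K φ₀ (s, μ) := by
    intro s hs μ hμ
    obtain ⟨hμU, hne⟩ := hAW (Set.mk_mem_prod (hs1A ⟨hs.1, hs.2.trans_le (min_le_right _ _)⟩) hμ)
    have lift {g : (Fin N → ℝ) → ℝ} (hg : ContDiffOn ℝ K g U) :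
        ContDiffAt ℝ K (fun p : ℝ × (Fin N → ℝ) => g p.2) (s, μ) :=
      ContDiffAt.comp (s, μ) (hg.contDiffAt (hU.mem_nhds hμU)) contDiffAt_snd
    have hψ1 : ContDiffAt ℝ K (fun p : ℝ × (Fin N → ℝ) => ψ p.1 p.2) (s, μ) :=
      hψc.contDiffAt ((isOpen_Ioo.prod hU).mem_nhds
        ⟨⟨hs.1, hs.2.trans_le (min_le_left _ _)⟩, hμU⟩)
    have hpow : ContDiffAt ℝ K (fun p : ℝ × (Fin N → ℝ) => a p.2 * p.1 ^ lam p.2) (s, μ) :=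
      (lift ha).mul (contDiffAt_fst.rpow (lift hlam) hs.1.ne')
    exact (((((lift hb).add hpow).add hψ1).rpow (lift hη) hne).sub (lift hbη)).sub
      (((lift hη).mul ((lift hb).rpow ((lift hη).sub contDiffAt_const) (hbpos μ hμU).ne')).mul
        hpow)
  -- A cutoff in `μ` makes the remainder `C^K` over all of `U` without changing it near `μ0`.
  obtain ⟨r, hr, hrW⟩ := Metric.mem_nhds_iff.1 hW
  let χ : ContDiffBump μ0 := ⟨r / 3, r / 2, by positivity, by linarith⟩
  have hχ1 : ∀ᶠ μ in 𝓝 μ0, χ μ = 1 := χ.eventuallyEq_one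
  refine ⟨fun s μ => χ μ * φ₀ (s, μ), ?_, ?_⟩
  · refine memF_of_flat hU hμ0 (ε := min ε s1) (lt_min hε hs1) ?_ fun n hn => ?_
    · rintro ⟨s, μ⟩ ⟨hs, -⟩
      refine ContDiffAt.contDiffWithinAt ?_
      by_cases hμ : μ ∈ Metric.ball μ0 r
      · exact (χ.contDiffAt.comp (s, μ) contDiffAt_snd).mul (hsmooth s hs μ (hrW hμ))
      · have h0 : ∀ᶠ p : ℝ × (Fin N → ℝ) in 𝓝 (s, μ), χ p.2 * φ₀ (p.1, p.2) = 0 := by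
          have : ∀ᶠ m in 𝓝 μ, m ∈ (Metric.closedBall μ0 (r / 2))ᶜ := by
            refine Metric.isClosed_closedBall.isOpen_compl.mem_nhds fun h => hμ ?_
            exact Metric.closedBall_subset_ball (by linarith) h
          filter_upwards [continuousAt_snd.eventually this] with p hp
          rw [χ.zero_of_le_dist, zero_mul]
          simp only [mem_compl_iff, Metric.mem_closedBall, not_le] at hp
          exact hp.le
        exact contDiffAt_const.congr_of_eventuallyEq h0
    · refine (hflat hn).congr ?_
      filter_upwards [approach_snd hχ1] with p hp
      simp [hp]
  · refine ⟨{μ | χ μ = 1} ∩ U, inter_subset_right, inter_mem hχ1 hUn, 1, one_pos, ?_⟩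
    rintro μ ⟨hμ, -⟩ s - -
    have : χ μ = 1 := hμ
    simp only [this, hφ₀]
    ring
end

section
/- For every δ > 0, both functions (s,α) ↦ ω(s;α) and (s,α) ↦ 1/ω(s;α) belong to the class 𝓕^∞_{−δ}(W) with parameter space ℝ and W = {α ∈ ℝ : α < δ}. -/
/-!
Write `L = -log s`. For `s > 0` one has `ω(s;α) = L Φ₀(αL)` with
`Φₙ(x) = ∫₀¹ tⁿ exp(tx) dt`; put `ωₙ = L^(n+1) Φₙ(αL)` (the `n`-th `α`-derivative of `ω`),
`η = 1/ω` and `θₙ = ωₙ/ω`. The identity `(n+1) Φₙ(x) + x Φₙ₊₁(x) = exp x = 1 + x Φ₀(x)` gives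

* `∂_α η = -η θ₁` and `s ∂_s η = η (η + α)`,
* `∂_α θₙ = θₙ₊₁ - θₙ θ₁` and `s ∂_s θₙ = (η + α) (θₙ - Lⁿ)`,
* `∂_α ω = ω θ₁` and `s ∂_s ω = -ω (η + α)`.

Hence the algebra `CompAlg` generated by constants, `α`, `L`, `η` and the `θₙ` is stable under `∂_α`
and `s ∂_s`, and so is `ω` times this algebra. For bounded `α` every element of the algebra is
bounded by a polynomial in `L`: `0 ≤ θₙ ≤ Lⁿ` because `0 ≤ Φₙ ≤ Φ₀`, and `η` is bounded because
`Φ₀(x) ≥ 1/(1+|x|)`. Finally `0 ≤ ω ≤ L s^(-δ')` whenever `α ≤ δ'` with `0 < δ' < δ`, and the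
powers of `L` are absorbed by the factor `s^(-(δ-δ'))`.
-/

open Topology Filter Set

/-! ### The functions `Φₙ` -/

/-- `Φₙ(x) = ∫₀¹ tⁿ exp(tx) dt`, the `n`-th derivative of `x ↦ (exp x - 1)/x`. -/
noncomputable def Phi (n : ℕ) (x : ℝ) : ℝ := ∫ t in (0:ℝ)..1, t ^ n * Real.exp (t * x)

theorem Phi_hasDerivAt (n : ℕ) (x : ℝ) : HasDerivAt (Phi n) (Phi (n + 1) x) x := by
  have h := intervalIntegral.hasDerivAt_integral_of_dominated_loc_of_deriv_le
    (μ := MeasureTheory.volume) (a := 0) (b := 1) (x₀ := x)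
    (F := fun y t => t ^ n * Real.exp (t * y))
    (F' := fun y t => t ^ (n + 1) * Real.exp (t * y))
    (s := Metric.ball x 1) (bound := fun _ => Real.exp (|x| + 1))
    (Metric.ball_mem_nhds x one_pos)
    (Eventually.of_forall fun y => Continuous.aestronglyMeasurable (by fun_prop))
    (Continuous.intervalIntegrable (by fun_prop) _ _)
    (Continuous.aestronglyMeasurable (by fun_prop))
    (Eventually.of_forall fun t ht y hy => by
      rw [uIoc_of_le zero_le_one] at ht
      have h1 : |y| ≤ |x| + 1 := by
        have h2 : |y - x| < 1 := by simpa [Real.dist_eq] using hy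
        have h3 : |y| ≤ |y - x| + |x| := by simpa using abs_add_le (y - x) x
        linarith
      have h4 : t * y ≤ |x| + 1 := by
        have h5 : t * y ≤ t * |y| := mul_le_mul_of_nonneg_left (le_abs_self y) ht.1.le
        have h6 : t * |y| ≤ 1 * |y| := mul_le_mul_of_nonneg_right ht.2 (abs_nonneg y)
        linarith
      rw [Real.norm_eq_abs, abs_of_nonneg (mul_nonneg (pow_nonneg ht.1.le _) (Real.exp_nonneg _))]
      calc t ^ (n + 1) * Real.exp (t * y) ≤ 1 * Real.exp (|x| + 1) :=
            mul_le_mul (pow_le_one₀ ht.1.le ht.2) (Real.exp_le_exp.mpr h4) (Real.exp_nonneg _)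
              zero_le_one
        _ = _ := one_mul _)
    (Continuous.intervalIntegrable (by fun_prop) _ _)
    (Eventually.of_forall fun t _ y _ => by
      have h1 : HasDerivAt (fun y : ℝ => t * y) t y := by
        simpa using (hasDerivAt_id y).const_mul t
      have h2 := (h1.exp).const_mul (t ^ n)
      refine HasDerivAt.congr_deriv h2 ?_
      ring)
  exact h.2

theorem Phi_contDiff (n : ℕ) : ContDiff ℝ ((⊤ : ℕ∞) : WithTop ℕ∞) (Phi n) := by
  rw [contDiff_infty]
  intro k
  induction k generalizing n with
  | zero =>
    exact contDiff_zero.mpr (continuous_iff_continuousAt.mpr fun x => (Phi_hasDerivAt n x).continuousAt)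
  | succ k ih =>
    have hd : deriv (Phi n) = Phi (n + 1) := funext fun x => (Phi_hasDerivAt n x).deriv
    push_cast
    rw [contDiff_succ_iff_deriv]
    refine ⟨fun x => (Phi_hasDerivAt n x).differentiableAt, by simp, ?_⟩
    rw [hd]
    exact ih (n + 1)

/-- Integrate the `t`-derivative of `t^(n+1) exp(tx)` over `[0,1]`. -/
theorem Phi_rel (n : ℕ) (x : ℝ) : (n + 1) * Phi n x + x * Phi (n + 1) x = Real.exp x := by
  have h := intervalIntegral.integral_eq_sub_of_hasDerivAt (a := 0) (b := 1)
    (f := fun t : ℝ => t ^ (n + 1) * Real.exp (t * x))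
    (f' := fun t => (n + 1) * (t ^ n * Real.exp (t * x)) + x * (t ^ (n + 1) * Real.exp (t * x)))
    (fun t _ => by
      have h1 : HasDerivAt (fun t : ℝ => t * x) x t := by
        simpa using (hasDerivAt_id t).mul_const x
      have h2 := (hasDerivAt_pow (n + 1) t).mul h1.exp
      refine HasDerivAt.congr_deriv h2 ?_
      push_cast
      ring)
    (Continuous.intervalIntegrable (by fun_prop) _ _)
  rw [intervalIntegral.integral_add (Continuous.intervalIntegrable (by fun_prop) _ _)
    (Continuous.intervalIntegrable (by fun_prop) _ _), intervalIntegral.integral_const_mul,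
    intervalIntegral.integral_const_mul] at h
  simpa [Phi] using h

theorem Phi_zero_rel (x : ℝ) : x * Phi 0 x = Real.exp x - 1 := by
  have h := intervalIntegral.integral_eq_sub_of_hasDerivAt (a := 0) (b := 1)
    (f := fun t : ℝ => Real.exp (t * x)) (f' := fun t => x * (t ^ 0 * Real.exp (t * x)))
    (fun t _ => by
      have h1 : HasDerivAt (fun t : ℝ => t * x) x t := by
        simpa using (hasDerivAt_id t).mul_const x
      refine HasDerivAt.congr_deriv h1.exp ?_
      ring)
    (Continuous.intervalIntegrable (by fun_prop) _ _)
  rw [intervalIntegral.integral_const_mul] at h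
  simpa [Phi] using h

theorem Phi_nonneg (n : ℕ) (x : ℝ) : 0 ≤ Phi n x :=
  intervalIntegral.integral_nonneg zero_le_one fun t ht =>
    mul_nonneg (pow_nonneg ht.1 _) (Real.exp_nonneg _)

theorem Phi_le_Phi_zero (n : ℕ) (x : ℝ) : Phi n x ≤ Phi 0 x := by
  refine intervalIntegral.integral_mono_on zero_le_one
    (Continuous.intervalIntegrable (by fun_prop) _ _)
    (Continuous.intervalIntegrable (by fun_prop) _ _) fun t ht => ?_
  rw [pow_zero]
  exact mul_le_mul_of_nonneg_right (pow_le_one₀ ht.1 ht.2) (Real.exp_nonneg _)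

theorem Phi_zero_le {x y : ℝ} (hxy : x ≤ y) (hy : 0 ≤ y) : Phi 0 x ≤ Real.exp y := by
  have h : Phi 0 x ≤ ∫ _ in (0:ℝ)..1, Real.exp y := by
    refine intervalIntegral.integral_mono_on zero_le_one
      (Continuous.intervalIntegrable (by fun_prop) _ _)
      (Continuous.intervalIntegrable (by fun_prop) _ _) fun t ht => ?_
    rw [pow_zero, one_mul]
    refine Real.exp_le_exp.mpr ?_
    nlinarith [mul_le_mul_of_nonneg_left hxy ht.1, mul_le_mul_of_nonneg_right ht.2 hy]
  simpa using h

theorem Phi_zero_lower (x : ℝ) : 1 ≤ (1 + |x|) * Phi 0 x := by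
  have hrel := Phi_zero_rel x
  rcases lt_trichotomy x 0 with hx | hx | hx
  · rw [abs_of_neg hx]
    -- With `y = -x > 0` this is `(1 + y)(1 - exp(-y)) ≥ y`, i.e. `exp y ≥ 1 + y`.
    have h1 : -x + 1 ≤ Real.exp (-x) := Real.add_one_le_exp _
    have h2 : Real.exp (-x) * Real.exp x = 1 := by rw [← Real.exp_add]; simp
    have h3 : (1 - x) * Real.exp x ≤ 1 := by nlinarith [Real.exp_pos x]
    by_contra hlt
    push Not at hlt
    nlinarith
  · subst hx
    simp [Phi]
  · rw [abs_of_pos hx]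
    have h1 : x + 1 ≤ Real.exp x := Real.add_one_le_exp _
    have h2 : 1 ≤ Phi 0 x := by
      by_contra hlt
      push Not at hlt
      nlinarith
    nlinarith

theorem Phi_zero_pos (x : ℝ) : 0 < Phi 0 x := by
  have h := Phi_zero_lower x
  by_contra hlt
  have h0 : Phi 0 x = 0 := le_antisymm (not_lt.mp hlt) (Phi_nonneg 0 x)
  rw [h0, mul_zero] at h
  linarith

/-! ### The functions `ωₙ`, `η`, `θₙ` -/

/-- `ωₙ(s;α) = L^(n+1) Φₙ(αL)` with `L = -log s`: the `n`-th `α`-derivative of the compensator. -/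
noncomputable def Om (n : ℕ) (s α : ℝ) : ℝ :=
  (-Real.log s) ^ (n + 1) * Phi n (α * -Real.log s)

theorem omegaComp_eq {s : ℝ} (hs : 0 < s) (α : ℝ) : omegaComp s α = Om 0 s α := by
  unfold omegaComp Om
  split_ifs with h
  · subst h
    simp [Phi]
  · rw [div_eq_iff h, Real.rpow_def_of_pos hs]
    have := Phi_zero_rel (α * -Real.log s)
    rw [show Real.log s * -α = α * -Real.log s by ring]
    linear_combination -this

theorem neg_log_pos {s : ℝ} (hs : s ∈ Ioo (0:ℝ) 1) : 0 < -Real.log s :=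
  neg_pos.mpr (Real.log_neg hs.1 hs.2)

theorem Om_zero_pos {s : ℝ} (hs : s ∈ Ioo (0:ℝ) 1) (α : ℝ) : 0 < Om 0 s α :=
  mul_pos (pow_pos (neg_log_pos hs) _) (Phi_zero_pos _)

theorem Om_hasDerivAt_param (n : ℕ) (s α : ℝ) :
    HasDerivAt (fun a => Om n s a) (Om (n + 1) s α) α := by
  have h1 : HasDerivAt (fun a : ℝ => a * -Real.log s) (-Real.log s) α := by
    simpa using (hasDerivAt_id α).mul_const (-Real.log s)
  have h2 := ((Phi_hasDerivAt n (α * -Real.log s)).comp α h1).const_mul ((-Real.log s) ^ (n + 1))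
  refine HasDerivAt.congr_deriv h2 ?_
  unfold Om
  ring

theorem neg_log_hasDerivAt {s : ℝ} (hs : 0 < s) :
    HasDerivAt (fun t => -Real.log t) (-1 / s) s := by
  have h := (Real.hasDerivAt_log hs.ne').neg
  refine HasDerivAt.congr_deriv h ?_
  rw [neg_div, one_div]

theorem Om_hasDerivAt_s (n : ℕ) {s : ℝ} (hs : 0 < s) (α : ℝ) :
    HasDerivAt (fun t => Om n t α) (-((-Real.log s) ^ n * (1 + α * Om 0 s α)) / s) s := by
  have hL := neg_log_hasDerivAt hs
  have h1 := (hL.pow (n + 1)).mul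
    ((Phi_hasDerivAt n (α * -Real.log s)).comp s (hL.const_mul α))
  refine HasDerivAt.congr_deriv h1 ?_
  have h2 := Phi_rel n (α * -Real.log s)
  have h3 := Phi_zero_rel (α * -Real.log s)
  have h4 : 1 + α * Om 0 s α
      = (n + 1) * Phi n (α * -Real.log s) + α * -Real.log s * Phi (n + 1) (α * -Real.log s) := by
    rw [h2]
    unfold Om
    linear_combination h3
  rw [h4]
  simp only [Function.comp, Pi.pow_apply]
  push_cast
  ring

/-- `η = 1/ω`. -/
noncomputable def eta (s α : ℝ) : ℝ := (Om 0 s α)⁻¹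

/-- `θₙ = ωₙ/ω`. -/
noncomputable def theta (n : ℕ) (s α : ℝ) : ℝ := Om n s α * eta s α

theorem eta_hasDerivAt_param {s : ℝ} (hs : s ∈ Ioo (0:ℝ) 1) (α : ℝ) :
    HasDerivAt (fun a => eta s a) (-(eta s α * theta 1 s α)) α := by
  have h := (Om_hasDerivAt_param 0 s α).inv (Om_zero_pos hs α).ne'
  refine HasDerivAt.congr_deriv h ?_
  unfold theta eta
  field_simp

theorem eta_hasDerivAt_s {s : ℝ} (hs : s ∈ Ioo (0:ℝ) 1) (α : ℝ) :
    HasDerivAt (fun t => eta t α) (eta s α * (eta s α + α) / s) s := by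
  have hne := (Om_zero_pos hs α).ne'
  have hs0 := hs.1.ne'
  have h := (Om_hasDerivAt_s 0 hs.1 α).inv hne
  refine HasDerivAt.congr_deriv h ?_
  unfold eta
  field_simp

theorem theta_hasDerivAt_param (n : ℕ) {s : ℝ} (hs : s ∈ Ioo (0:ℝ) 1) (α : ℝ) :
    HasDerivAt (fun a => theta n s a) (theta (n + 1) s α + -1 * (theta n s α * theta 1 s α)) α := by
  have h := (Om_hasDerivAt_param n s α).mul (eta_hasDerivAt_param hs α)
  refine HasDerivAt.congr_deriv h ?_
  unfold theta
  ring

theorem theta_hasDerivAt_s (n : ℕ) {s : ℝ} (hs : s ∈ Ioo (0:ℝ) 1) (α : ℝ) :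
    HasDerivAt (fun t => theta n t α)
      ((eta s α + α) * (theta n s α + -1 * (-Real.log s) ^ n) / s) s := by
  have hne := (Om_zero_pos hs α).ne'
  have hs0 := hs.1.ne'
  have h := (Om_hasDerivAt_s n hs.1 α).mul (eta_hasDerivAt_s hs α)
  refine HasDerivAt.congr_deriv h ?_
  unfold theta eta
  field_simp
  ring

/-! ### The differential algebra -/

/-- The algebra of functions of `(s, α)` generated by constants, `α`, `L = -log s`, `η` and the
`θₙ`. Only the values for `0 < s < 1` matter. -/
inductive CompAlg : (ℝ → ℝ → ℝ) → Prop
  | const (c : ℝ) : CompAlg (fun _ _ => c)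
  | param : CompAlg (fun _ α => α)
  | log : CompAlg (fun s _ => -Real.log s)
  | eta : CompAlg (fun s α => eta s α)
  | theta (n : ℕ) : CompAlg (fun s α => theta n s α)
  | add {f g : ℝ → ℝ → ℝ} : CompAlg f → CompAlg g → CompAlg (fun s α => f s α + g s α)
  | mul {f g : ℝ → ℝ → ℝ} : CompAlg f → CompAlg g → CompAlg (fun s α => f s α * g s α)

theorem CompAlg.log_pow (n : ℕ) : CompAlg (fun s _ => (-Real.log s) ^ n) := by
  induction n with
  | zero => simpa using CompAlg.const 1
  | succ n ih => simpa only [pow_succ] using ih.mul CompAlg.log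

theorem CompAlg.deriv_param {f : ℝ → ℝ → ℝ} (hf : CompAlg f) :
    ∃ g, CompAlg g ∧ ∀ s ∈ Ioo (0:ℝ) 1, ∀ α, HasDerivAt (fun a => f s a) (g s α) α := by
  induction hf with
  | const c => exact ⟨_, .const 0, fun s _ α => hasDerivAt_const α c⟩
  | param => exact ⟨_, .const 1, fun s _ α => hasDerivAt_id α⟩
  | log => exact ⟨_, .const 0, fun s _ α => hasDerivAt_const α _⟩
  | eta =>
    refine ⟨_, (CompAlg.const (-1)).mul (CompAlg.eta.mul (.theta 1)), fun s hs α => ?_⟩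
    simpa using eta_hasDerivAt_param hs α
  | theta n =>
    exact ⟨_, (CompAlg.theta (n + 1)).add ((CompAlg.const (-1)).mul ((CompAlg.theta n).mul (.theta 1))),
      fun s hs α => theta_hasDerivAt_param n hs α⟩
  | add _ _ ihf ihg =>
    obtain ⟨f', hf', hf⟩ := ihf
    obtain ⟨g', hg', hg⟩ := ihg
    exact ⟨_, hf'.add hg', fun s hs α => (hf s hs α).add (hg s hs α)⟩
  | mul cf cg ihf ihg =>
    obtain ⟨f', hf', hf⟩ := ihf
    obtain ⟨g', hg', hg⟩ := ihg
    exact ⟨_, (hf'.mul cg).add (cf.mul hg'), fun s hs α => (hf s hs α).mul (hg s hs α)⟩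

theorem CompAlg.deriv_s {f : ℝ → ℝ → ℝ} (hf : CompAlg f) :
    ∃ g, CompAlg g ∧ ∀ s ∈ Ioo (0:ℝ) 1, ∀ α, HasDerivAt (fun t => f t α) (g s α / s) s := by
  induction hf with
  | const c => exact ⟨_, .const 0, fun s _ α => by simpa using hasDerivAt_const s c⟩
  | param => exact ⟨_, .const 0, fun s _ α => by simpa using hasDerivAt_const s α⟩
  | log => exact ⟨_, .const (-1), fun s hs α => neg_log_hasDerivAt hs.1⟩
  | eta => exact ⟨_, CompAlg.eta.mul (CompAlg.eta.add .param), fun s hs α => eta_hasDerivAt_s hs α⟩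
  | theta n =>
    exact ⟨_, (CompAlg.eta.add .param).mul
      ((CompAlg.theta n).add ((CompAlg.const (-1)).mul (CompAlg.log_pow n))),
      fun s hs α => theta_hasDerivAt_s n hs α⟩
  | add _ _ ihf ihg =>
    obtain ⟨f', hf', hf⟩ := ihf
    obtain ⟨g', hg', hg⟩ := ihg
    refine ⟨_, hf'.add hg', fun s hs α => ?_⟩
    rw [add_div]
    exact (hf s hs α).add (hg s hs α)
  | @mul f g cf cg ihf ihg =>
    obtain ⟨f', hf', hf⟩ := ihf
    obtain ⟨g', hg', hg⟩ := ihg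
    refine ⟨_, (hf'.mul cg).add (cf.mul hg'), fun s hs α => ?_⟩
    have h := (hf s hs α).mul (hg s hs α)
    refine HasDerivAt.congr_deriv h ?_
    ring

theorem one_le_neg_log {s : ℝ} (hs : s ∈ Ioo (0:ℝ) (Real.exp (-1))) : 1 ≤ -Real.log s := by
  have h := Real.log_lt_log hs.1 hs.2
  rw [Real.log_exp] at h
  linarith

theorem Ioo_exp_subset : Ioo (0:ℝ) (Real.exp (-1)) ⊆ Ioo 0 1 :=
  Ioo_subset_Ioo_right (Real.exp_le_one_iff.mpr (by norm_num))

/-- Locally uniformly in `α`, elements of the algebra grow at most polynomially in `L`. -/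
theorem CompAlg.bound {f : ℝ → ℝ → ℝ} (hf : CompAlg f) (A : ℝ) (hA : 0 ≤ A) :
    ∃ C, 0 ≤ C ∧ ∃ k : ℕ, ∀ s ∈ Ioo (0:ℝ) (Real.exp (-1)), ∀ α, |α| ≤ A →
      |f s α| ≤ C * (-Real.log s) ^ k := by
  induction hf with
  | const c => exact ⟨|c|, abs_nonneg c, 0, fun s _ α _ => by simp⟩
  | param => exact ⟨A, hA, 0, fun s _ α hα => by simpa using hα⟩
  | log =>
    refine ⟨1, zero_le_one, 1, fun s hs α _ => ?_⟩
    rw [abs_of_nonneg (by linarith [one_le_neg_log hs]), pow_one, one_mul]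
  | eta =>
    refine ⟨1 + A, by linarith, 0, fun s hs α hα => ?_⟩
    have hL := one_le_neg_log hs
    have hpos := Om_zero_pos (Ioo_exp_subset hs) α
    change |_root_.eta s α| ≤ _
    rw [pow_zero, mul_one, _root_.eta, abs_of_pos (inv_pos.mpr hpos),
      inv_le_iff_one_le_mul₀ hpos]
    have h1 := Phi_zero_lower (α * -Real.log s)
    rw [abs_mul, abs_of_nonneg (by linarith : 0 ≤ -Real.log s)] at h1
    refine h1.trans ?_
    rw [Om, zero_add, pow_one, ← mul_assoc]
    refine mul_le_mul_of_nonneg_right ?_ (Phi_nonneg _ _)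
    nlinarith
  | theta n =>
    refine ⟨1, zero_le_one, n, fun s hs α _ => ?_⟩
    have hL : 0 ≤ -Real.log s := by linarith [one_le_neg_log hs]
    have hpos := Om_zero_pos (Ioo_exp_subset hs) α
    have hn : 0 ≤ Om n s α := mul_nonneg (pow_nonneg hL _) (Phi_nonneg _ _)
    change |_root_.theta n s α| ≤ _
    rw [_root_.theta, _root_.eta, abs_of_nonneg (mul_nonneg hn (inv_pos.mpr hpos).le),
      ← div_eq_mul_inv, div_le_iff₀ hpos, one_mul, Om, Om, zero_add, pow_one, ← mul_assoc,
      ← pow_succ]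
    exact mul_le_mul_of_nonneg_left (Phi_le_Phi_zero _ _) (pow_nonneg hL _)
  | @add f g _ _ ihf ihg =>
    obtain ⟨C, hC, k, hf⟩ := ihf
    obtain ⟨D, hD, l, hg⟩ := ihg
    refine ⟨C + D, add_nonneg hC hD, k + l, fun s hs α hα => ?_⟩
    have hL := one_le_neg_log hs
    have h1 := mul_le_mul_of_nonneg_left (pow_le_pow_right₀ hL (Nat.le_add_right k l)) hC
    have h2 := mul_le_mul_of_nonneg_left (pow_le_pow_right₀ hL (Nat.le_add_left l k)) hD
    have h3 := abs_add_le (f s α) (g s α)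
    have h4 := hf s hs α hα
    have h5 := hg s hs α hα
    rw [add_mul]
    linarith
  | @mul f g _ _ ihf ihg =>
    obtain ⟨C, hC, k, hf⟩ := ihf
    obtain ⟨D, hD, l, hg⟩ := ihg
    refine ⟨C * D, mul_nonneg hC hD, k + l, fun s hs α hα => ?_⟩
    have hL : 0 ≤ -Real.log s := by linarith [one_le_neg_log hs]
    rw [abs_mul, pow_add, mul_mul_mul_comm]
    exact mul_le_mul (hf s hs α hα) (hg s hs α hα) (abs_nonneg _)
      (mul_nonneg hC (pow_nonneg hL _))

/-! ### Mixed derivatives -/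

/-- `w` has logarithmic derivatives `∂_α w / w` and `s ∂_s w / w` in the algebra, so that `w`
times the algebra is stable under `∂_α` and `s ∂_s`. -/
structure IsWeight (w : ℝ → ℝ → ℝ) : Prop where
  param : ∃ p, CompAlg p ∧ ∀ s ∈ Ioo (0:ℝ) 1, ∀ α, HasDerivAt (fun a => w s a) (w s α * p s α) α
  s : ∃ q, CompAlg q ∧ ∀ s ∈ Ioo (0:ℝ) 1, ∀ α, HasDerivAt (fun t => w t α) (w s α * q s α / s) s

/-- On `0 < s < 1`, `ψ` is `w s^(-m)` times an element of the algebra. -/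
def InMod (w : ℝ → ℝ → ℝ) (m : ℕ) (ψ : ℝ → (Fin 1 → ℝ) → ℝ) : Prop :=
  ∃ f, CompAlg f ∧ ∀ s ∈ Ioo (0:ℝ) 1, ∀ μ, ψ s μ = w s (μ 0) * f s (μ 0) / s ^ m

theorem InMod.dMu {w : ℝ → ℝ → ℝ} (hw : IsWeight w) {m : ℕ} {ψ : ℝ → (Fin 1 → ℝ) → ℝ}
    (h : InMod w m ψ) : InMod w m (dMu 0 ψ) := by
  obtain ⟨f, cf, hf⟩ := h
  obtain ⟨f', cf', hf'⟩ := cf.deriv_param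
  obtain ⟨p, cp, hp⟩ := hw.param
  refine ⟨_, (cp.mul cf).add cf', fun s hs μ => ?_⟩
  have h1 : HasDerivAt (fun a => w s a * f s a / s ^ m)
      ((w s (μ 0) * p s (μ 0) * f s (μ 0) + w s (μ 0) * f' s (μ 0)) / s ^ m) (μ 0) :=
    ((hp s hs (μ 0)).mul (hf' s hs (μ 0))).div_const _
  have h2 : HasFDerivAt (fun m : Fin 1 → ℝ => m 0)
      (ContinuousLinearMap.proj (R := ℝ) (φ := fun _ : Fin 1 => ℝ) 0) μ :=
    (ContinuousLinearMap.proj (R := ℝ) (φ := fun _ : Fin 1 => ℝ) 0).hasFDerivAt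
  have h3 := h1.comp_hasFDerivAt μ h2
  have h4 : (fun m => ψ s m) = (fun a => w s a * f s a / s ^ m) ∘ fun m : Fin 1 → ℝ => m 0 :=
    funext fun m => hf s hs m
  unfold _root_.dMu
  rw [h4, h3.fderiv]
  simp
  ring

theorem InMod.dS {w : ℝ → ℝ → ℝ} (hw : IsWeight w) {m : ℕ} {ψ : ℝ → (Fin 1 → ℝ) → ℝ}
    (h : InMod w m ψ) : InMod w (m + 1) (dS ψ) := by
  obtain ⟨f, cf, hf⟩ := h
  obtain ⟨f', cf', hf'⟩ := cf.deriv_s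
  obtain ⟨q, cq, hq⟩ := hw.s
  refine ⟨_, ((cq.mul cf).add cf').add ((CompAlg.const (-m)).mul cf), fun s hs μ => ?_⟩
  have hs0 := hs.1.ne'
  have h1 := ((hq s hs (μ 0)).mul (hf' s hs (μ 0))).div (hasDerivAt_pow m s) (pow_ne_zero m hs0)
  have h2 : (fun t => ψ t μ) =ᶠ[𝓝 s] fun t => w t (μ 0) * f t (μ 0) / t ^ m :=
    Filter.eventuallyEq_of_mem (isOpen_Ioo.mem_nhds hs) fun t ht => hf t ht μ
  unfold _root_.dS
  rw [h2.deriv_eq]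
  refine (HasDerivAt.deriv h1).trans ?_
  rcases m with _ | m
  · simp
    field_simp
  · simp only [Nat.add_sub_cancel, Pi.mul_apply]
    push_cast
    field_simp
    ring

theorem InMod.mixedDeriv {w : ℝ → ℝ → ℝ} (hw : IsWeight w) {ψ : ℝ → (Fin 1 → ℝ) → ℝ}
    (h : InMod w 0 ψ) (ν0 : ℕ) (ν : Fin 1 → ℕ) : InMod w ν0 (mixedDeriv ν0 ν ψ) := by
  have h1 : ∀ n, InMod w 0 ((_root_.dMu 0)^[n] ψ) := fun n => by
    induction n with
    | zero => exact h
    | succ n ih =>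
      rw [Function.iterate_succ_apply']
      exact ih.dMu hw
  have h2 : (List.finRange 1).foldr (fun i φ => (_root_.dMu i)^[ν i] φ) ψ
      = (_root_.dMu 0)^[ν 0] ψ := by
    simp [List.finRange_succ]
  unfold _root_.mixedDeriv
  rw [h2]
  induction ν0 with
  | zero => exact h1 _
  | succ n ih =>
    rw [Function.iterate_succ_apply']
    exact ih.dS hw

theorem InMod.bound {w : ℝ → ℝ → ℝ}
    (hb : ∀ d, 0 < d → ∀ s ∈ Ioo (0:ℝ) (Real.exp (-1)), ∀ α ≤ d,
      |w s α| ≤ -Real.log s * Real.exp (d * -Real.log s))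
    {ψ : ℝ → (Fin 1 → ℝ) → ℝ} {m : ℕ} (h : InMod w m ψ) {δ : ℝ} (hδ : 0 < δ)
    (μ0 : Fin 1 → ℝ) (hμ0 : μ0 0 < δ) :
    ∃ V ⊆ (univ : Set (Fin 1 → ℝ)), V ∈ 𝓝 μ0 ∧ ∃ C > 0, ∃ s0 > 0, ∀ μ ∈ V, ∀ s ∈ Ioo (0:ℝ) s0,
      |ψ s μ| ≤ C * s ^ (-δ - (m : ℝ)) := by
  obtain ⟨f, cf, hf⟩ := h
  obtain ⟨d, hd1, hdδ⟩ := exists_between (max_lt hδ hμ0)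
  obtain ⟨hd0, hμd⟩ := max_lt_iff.mp hd1
  obtain ⟨C, hC, k, hCk⟩ := cf.bound (|μ0 0| + 1) (by positivity)
  have hc : 0 < δ - d := sub_pos.mpr hdδ
  refine ⟨{μ | μ 0 < d ∧ |μ 0| < |μ0 0| + 1}, subset_univ _, ?_,
    (C + 1) * (((k + 1).factorial : ℝ) / (δ - d) ^ (k + 1)), by positivity, Real.exp (-1),
    Real.exp_pos _, fun μ hμ s hs => ?_⟩
  · refine IsOpen.mem_nhds ?_ ⟨hμd, by linarith⟩
    exact (isOpen_lt (continuous_apply 0) continuous_const).inter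
      (isOpen_lt (continuous_apply 0).abs continuous_const)
  · have hL : 0 < -Real.log s := by linarith [one_le_neg_log hs]
    rw [hf s (Ioo_exp_subset hs) μ, abs_div, abs_mul, abs_of_pos (pow_pos hs.1 m),
      Real.rpow_sub hs.1, Real.rpow_natCast, ← mul_div_assoc]
    refine div_le_div_of_nonneg_right ?_ (pow_pos hs.1 m).le
    -- The factor `L^(k+1)` is absorbed using `x^(k+1)/(k+1)! ≤ exp x` at `x = (δ - d) L`.
    have h1 : (-Real.log s) ^ (k + 1)
        ≤ ((k + 1).factorial : ℝ) / (δ - d) ^ (k + 1) * Real.exp ((δ - d) * -Real.log s) := by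
      have h2 := Real.pow_div_factorial_le_exp ((δ - d) * -Real.log s) (by positivity) (k + 1)
      rw [mul_pow, div_le_iff₀ (by positivity)] at h2
      rw [div_mul_eq_mul_div, le_div_iff₀ (by positivity)]
      linarith
    have h3 : s ^ (-δ) = Real.exp ((δ - d) * -Real.log s) * Real.exp (d * -Real.log s) := by
      rw [Real.rpow_def_of_pos hs.1, ← Real.exp_add]
      congr 1
      ring
    calc |w s (μ 0)| * |f s (μ 0)|
        ≤ (-Real.log s * Real.exp (d * -Real.log s)) * (C * (-Real.log s) ^ k) :=
          mul_le_mul (hb d hd0 s hs _ hμ.1.le) (hCk s hs _ hμ.2.le) (abs_nonneg _) (by positivity)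
      _ = C * Real.exp (d * -Real.log s) * (-Real.log s) ^ (k + 1) := by ring
      _ ≤ (C + 1) * Real.exp (d * -Real.log s) * (((k + 1).factorial : ℝ) / (δ - d) ^ (k + 1) *
            Real.exp ((δ - d) * -Real.log s)) := by
          refine mul_le_mul ?_ h1 (by positivity) (by positivity)
          exact mul_le_mul_of_nonneg_right (by linarith) (Real.exp_nonneg _)
      _ = _ := by rw [h3]; ring

theorem isWeight_one : IsWeight (fun _ _ => 1) where
  param := ⟨_, .const 0, fun s _ α => by simpa using hasDerivAt_const α (1:ℝ)⟩
  s := ⟨_, .const 0, fun s _ α => by simpa using hasDerivAt_const s (1:ℝ)⟩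

theorem isWeight_Om : IsWeight (Om 0) where
  param := by
    refine ⟨_, .theta 1, fun s hs α => ?_⟩
    have hne := (Om_zero_pos hs α).ne'
    refine HasDerivAt.congr_deriv (Om_hasDerivAt_param 0 s α) ?_
    unfold theta eta
    field_simp
  s := by
    refine ⟨_, (CompAlg.const (-1)).mul (CompAlg.eta.add .param), fun s hs α => ?_⟩
    have hne := (Om_zero_pos hs α).ne'
    refine HasDerivAt.congr_deriv (Om_hasDerivAt_s 0 hs.1 α) ?_
    unfold eta
    field_simp

theorem Om_zero_contDiffOn :
    ContDiffOn ℝ ((⊤ : ℕ∞) : WithTop ℕ∞) (fun p : ℝ × (Fin 1 → ℝ) => Om 0 p.1 (p.2 0))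
      (Ioo 0 1 ×ˢ univ) := by
  have hL : ContDiffOn ℝ ((⊤ : ℕ∞) : WithTop ℕ∞) (fun p : ℝ × (Fin 1 → ℝ) => -Real.log p.1)
      (Ioo 0 1 ×ˢ univ) :=
    (contDiff_fst.contDiffOn.log fun p hp => hp.1.1.ne').neg
  have hα : ContDiffOn ℝ ((⊤ : ℕ∞) : WithTop ℕ∞) (fun p : ℝ × (Fin 1 → ℝ) => p.2 0)
      (Ioo 0 1 ×ˢ univ) :=
    ((contDiff_apply ℝ ℝ (0 : Fin 1)).comp contDiff_snd).contDiffOn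
  exact (hL.pow 1).mul ((Phi_contDiff 0).comp_contDiffOn (hα.mul hL))

/-- Lemma 3.6 (third item): ω and 1/ω belong to 𝓕^∞_{−δ}({α < δ}). -/
theorem omegaComp_mem_flat (δ : ℝ) (hδ : 0 < δ) :
    MemFSet (⊤ : ℕ∞) (-δ) (Set.univ) {μ : Fin 1 → ℝ | μ 0 < δ}
      (fun s μ => omegaComp s (μ 0)) ∧
    MemFSet (⊤ : ℕ∞) (-δ) (Set.univ) {μ : Fin 1 → ℝ | μ 0 < δ}
      (fun s μ => 1 / omegaComp s (μ 0)) := by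
  refine ⟨fun μ0 hμ0 => ⟨⟨1, one_pos, ?_⟩, fun ν0 ν _ => ?_⟩,
    fun μ0 hμ0 => ⟨⟨1, one_pos, ?_⟩, fun ν0 ν _ => ?_⟩⟩
  · exact Om_zero_contDiffOn.congr fun p hp => omegaComp_eq hp.1.1 _
  · have h : InMod (Om 0) 0 (fun s μ => omegaComp s (μ 0)) :=
      ⟨_, .const 1, fun s hs μ => by simp [omegaComp_eq hs.1]⟩
    refine (h.mixedDeriv isWeight_Om ν0 ν).bound (fun d hd s hs α hα => ?_) hδ μ0 hμ0
    have hL : 0 ≤ -Real.log s := by linarith [one_le_neg_log hs]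
    rw [abs_of_pos (Om_zero_pos (Ioo_exp_subset hs) α), Om, zero_add, pow_one]
    exact mul_le_mul_of_nonneg_left
      (Phi_zero_le (mul_le_mul_of_nonneg_right hα hL) (mul_nonneg hd.le hL)) hL
  · refine (Om_zero_contDiffOn.inv fun p hp => (Om_zero_pos hp.1 _).ne').congr fun p hp => ?_
    simp only [omegaComp_eq hp.1.1, one_div, Pi.inv_apply]
  · have h : InMod (fun _ _ => 1) 0 (fun s μ => 1 / omegaComp s (μ 0)) :=
      ⟨_, .eta, fun s hs μ => by simp [omegaComp_eq hs.1, eta]⟩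
    refine (h.mixedDeriv isWeight_one ν0 ν).bound (fun d hd s hs α _ => ?_) hδ μ0 hμ0
    have hL := one_le_neg_log hs
    have h1 : 1 ≤ Real.exp (d * -Real.log s) :=
      Real.one_le_exp (mul_nonneg hd.le (by linarith))
    rw [abs_one]
    nlinarith
end

section
/- Let U ⊆ ℝ^N be open, μ0 ∈ U, and let λ, Δ, Ω ∈ C^∞(U) with λ > 0 and Δ > 0; set ρ = 1/λ, λ^0 = λ(μ0), ρ^0 = 1/λ^0. Let D(s;μ) be a family of functions, defined and strictly positive for μ ∈ U and all sufficiently small s > 0, which for each μ is invertible with respect to s near s = 0 with inverse D^{-1}(·;μ) (so D^{-1}(D(s;μ);μ) = s for small s > 0). Assume that for every ℓ ∈ (0, min{λ^0, 1}) there is R ∈ 𝓕^∞_ℓ(μ0) with D(s;μ) = s^{λ(μ)}(Δ(μ) + R(s;μ)), and for every η ∈ (0, min{ρ^0, 1}) there is R' ∈ 𝓕^∞_η(μ0) with D^{-1}(s;μ) = s^{ρ(μ)}(Ω(μ) + R'(s;μ)). Then Ω = Δ^{−ρ} on a neighborhood of μ0. -/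
/-!
Fix `μ` near `μ0`. Flatness of order `ℓ > 0` with the trivial multi-index gives `R(s;μ) → 0` as
`s → 0⁺` (`MemF.tendsto_zero`), and likewise for `R'`; in particular `D(s;μ) → 0⁺`. Substituting
both expansions into `D⁻¹(D(s;μ);μ) = s` and cancelling `s` leaves
`(Δ + R(s))^ρ · (Ω + R'(D(s))) = 1` with `ρ = 1/λ`, and `s → 0⁺` gives `Δ^ρ · Ω = 1`. The
neighbourhood is the intersection of those on which the two remainders are bounded.
-/

open Topology Filter Set

theorem mixedDeriv_zero {N : ℕ} (ψ : ℝ → (Fin N → ℝ) → ℝ) :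
    mixedDeriv 0 (fun _ => 0) ψ = ψ := by
  simp [mixedDeriv]

/-- A function flat of positive order tends to `0` with `s`, for every parameter near `μ0`. -/
theorem MemF.tendsto_zero {N : ℕ} {K : ℕ∞} {L : ℝ} {U : Set (Fin N → ℝ)} {μ0 : Fin N → ℝ}
    {ψ : ℝ → (Fin N → ℝ) → ℝ} (h : MemF K L U μ0 ψ) (hL : 0 < L) :
    ∃ V ⊆ U, V ∈ 𝓝 μ0 ∧ ∀ μ ∈ V, Tendsto (fun s => ψ s μ) (𝓝[>] 0) (𝓝 0) := by
  obtain ⟨V, hVU, hV, C, -, s0, hs0, hb⟩ := h.2 0 (fun _ => 0) (by simp)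
  refine ⟨V, hVU, hV, fun μ hμ => ?_⟩
  have hlim : Tendsto (fun s : ℝ => C * s ^ L) (𝓝[>] 0) (𝓝 0) := by
    have h1 : Tendsto (fun s : ℝ => s ^ L) (𝓝[>] 0) (𝓝 ((0 : ℝ) ^ L)) :=
      (Real.continuousAt_rpow_const 0 L (Or.inr hL.le)).tendsto.mono_left nhdsWithin_le_nhds
    simpa [Real.zero_rpow hL.ne'] using h1.const_mul C
  refine squeeze_zero_norm' ?_ hlim
  filter_upwards [Ioo_mem_nhdsGT hs0] with s hs
  simpa [mixedDeriv_zero] using hb μ hμ s hs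

/-- Lemma 4.10: leading coefficient of the inverse of a Dulac map. -/
theorem dulac_inverse_leading {N : ℕ} (U : Set (Fin N → ℝ)) (hU : IsOpen U)
    (μ0 : Fin N → ℝ) (hμ0 : μ0 ∈ U)
    (lam Δ Ω : (Fin N → ℝ) → ℝ)
    (hlam : ContDiffOn ℝ (⊤ : ℕ∞) lam U) (hΔ : ContDiffOn ℝ (⊤ : ℕ∞) Δ U)
    (hΩ : ContDiffOn ℝ (⊤ : ℕ∞) Ω U)
    (hlampos : ∀ μ ∈ U, 0 < lam μ) (hΔpos : ∀ μ ∈ U, 0 < Δ μ)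
    (D Dinv : ℝ → (Fin N → ℝ) → ℝ)
    (hDpos : ∃ s0 > 0, ∀ μ ∈ U, ∀ s ∈ Set.Ioo (0:ℝ) s0, 0 < D s μ)
    (hinv : ∃ s0 > 0, ∀ μ ∈ U, ∀ s ∈ Set.Ioo (0:ℝ) s0, Dinv (D s μ) μ = s)
    (hD : ∀ ℓ ∈ Set.Ioo (0:ℝ) (min (lam μ0) 1),
      ∃ R : ℝ → (Fin N → ℝ) → ℝ, MemF (⊤ : ℕ∞) ℓ U μ0 R ∧
        ∃ s0 > 0, ∀ μ ∈ U, ∀ s ∈ Set.Ioo (0:ℝ) s0,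
          D s μ = s ^ lam μ * (Δ μ + R s μ))
    (hDinv : ∀ η ∈ Set.Ioo (0:ℝ) (min (lam μ0)⁻¹ 1),
      ∃ R' : ℝ → (Fin N → ℝ) → ℝ, MemF (⊤ : ℕ∞) η U μ0 R' ∧
        ∃ s0 > 0, ∀ μ ∈ U, ∀ s ∈ Set.Ioo (0:ℝ) s0,
          Dinv s μ = s ^ (lam μ)⁻¹ * (Ω μ + R' s μ)) :
    ∃ V ⊆ U, V ∈ 𝓝 μ0 ∧ ∀ μ ∈ V, Ω μ = (Δ μ) ^ (-(lam μ)⁻¹) := by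
  -- Any admissible orders work; half of each upper bound is a convenient choice.
  have hl0 : 0 < lam μ0 := hlampos μ0 hμ0
  have hm : 0 < min (lam μ0) 1 := lt_min hl0 one_pos
  have hm' : 0 < min (lam μ0)⁻¹ 1 := lt_min (inv_pos.mpr hl0) one_pos
  obtain ⟨R, hR, a, ha, hDR⟩ := hD _ ⟨half_pos hm, half_lt_self hm⟩
  obtain ⟨R', hR', b, hb, hDR'⟩ := hDinv _ ⟨half_pos hm', half_lt_self hm'⟩
  obtain ⟨c, hc, hpos⟩ := hDpos
  obtain ⟨d, hd, hinv⟩ := hinv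
  obtain ⟨V, hVU, hV, hRlim⟩ := hR.tendsto_zero (half_pos hm)
  obtain ⟨V', -, hV', hRlim'⟩ := hR'.tendsto_zero (half_pos hm')
  refine ⟨V ∩ V', inter_subset_left.trans hVU, inter_mem hV hV', ?_⟩
  rintro μ ⟨hμ, hμ'⟩
  have hμU := hVU hμ
  have hl := hlampos μ hμU
  have hΔμ := hΔpos μ hμU
  have hsum : Tendsto (fun s => Δ μ + R s μ) (𝓝[>] 0) (𝓝 (Δ μ)) := by
    simpa using (hRlim μ hμ).const_add (Δ μ)
  have hpow : Tendsto (fun s : ℝ => s ^ lam μ) (𝓝[>] 0) (𝓝 0) := by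
    have h1 : Tendsto (fun s : ℝ => s ^ lam μ) (𝓝[>] 0) (𝓝 ((0 : ℝ) ^ lam μ)) :=
      (Real.continuousAt_rpow_const 0 _ (Or.inr hl.le)).tendsto.mono_left nhdsWithin_le_nhds
    simpa [Real.zero_rpow hl.ne'] using h1
  have hDlim : Tendsto (fun s => D s μ) (𝓝[>] 0) (𝓝[>] 0) := by
    refine tendsto_nhdsWithin_iff.mpr ⟨?_, ?_⟩
    · have h1 : Tendsto (fun s => s ^ lam μ * (Δ μ + R s μ)) (𝓝[>] 0) (𝓝 0) := by
        simpa using hpow.mul hsum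
      refine h1.congr' ?_
      filter_upwards [Ioo_mem_nhdsGT ha] with s hs
      exact (hDR μ hμU s hs).symm
    · filter_upwards [Ioo_mem_nhdsGT hc] with s hs
      exact hpos μ hμU s hs
  have hprod : Tendsto (fun s => (Δ μ + R s μ) ^ (lam μ)⁻¹ * (Ω μ + R' (D s μ) μ)) (𝓝[>] 0)
      (𝓝 (Δ μ ^ (lam μ)⁻¹ * Ω μ)) := by
    refine (hsum.rpow_const (Or.inl hΔμ.ne')).mul ?_
    simpa using ((hRlim' μ hμ').comp hDlim).const_add (Ω μ)
  have hone : Tendsto (fun s => (Δ μ + R s μ) ^ (lam μ)⁻¹ * (Ω μ + R' (D s μ) μ)) (𝓝[>] 0)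
      (𝓝 1) := by
    refine tendsto_const_nhds.congr' ?_
    filter_upwards [Ioo_mem_nhdsGT ha, Ioo_mem_nhdsGT hd, hDlim (Ioo_mem_nhdsGT hb),
      hsum.eventually (lt_mem_nhds hΔμ)] with s hsa hsd hsb hs
    have h1 := hDR' μ hμU _ hsb
    have hs0 : 0 < s := hsa.1
    have h2 : D s μ ^ (lam μ)⁻¹ = s * (Δ μ + R s μ) ^ (lam μ)⁻¹ := by
      rw [hDR μ hμU s hsa, Real.mul_rpow (Real.rpow_nonneg hs0.le _) hs.le,
        Real.rpow_rpow_inv hs0.le hl.ne']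
    rw [hinv μ hμU s hsd, h2, mul_assoc] at h1
    exact mul_left_cancel₀ hs0.ne' ((mul_one s).trans h1)
  have hfin := tendsto_nhds_unique hprod hone
  rw [Real.rpow_neg hΔμ.le]
  exact eq_inv_of_mul_eq_one_right hfin
end

section
/- Let U ⊆ ℝ^N be open, μ0 ∈ U, and let λ, Δ00, Δ01, Ω00, Ω10 ∈ C^∞(U) with λ > 0, Δ00 > 0 and λ(μ0) < 1; set ρ = 1/λ, λ^0 = λ(μ0), ρ^0 = 1/λ^0. Let D(s;μ) be a family of functions, defined and strictly positive for μ ∈ U and all sufficiently small s > 0, invertible with respect to s near s = 0 with inverse D^{-1}(·;μ). Assume that for every ℓ ∈ (λ^0, min{2λ^0, 1}) there is R ∈ 𝓕^∞_ℓ(μ0) with D(s;μ) = s^{λ(μ)}(Δ00(μ) + Δ01(μ)·s^{λ(μ)} + R(s;μ)), and for every η ∈ (1, min{ρ^0, 2}) there is R' ∈ 𝓕^∞_η(μ0) with D^{-1}(s;μ) = s^{ρ(μ)}(Ω00(μ) + Ω10(μ)·s + R'(s;μ)). Then, on a neighborhood of μ0, Ω00 = Δ00^{−ρ} and Ω10 =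 −ρ·Δ00^{−(2+ρ)}·Δ01. -/
/-!
Fix `μ` near `μ0` and write `u = s ^ λ`, `A = Δ00 + Δ01 u + R`, so that `D s = u A`. Once
`λ(μ) < ℓ` and `1 < η`, the flatness bounds give `R = o(u)` and `R'(t) = o(t)`. Substituting
`t = D s` in the expansion of the inverse and dividing `D⁻¹ (D s) = s = u ^ ρ` by `t ^ ρ` yields
`A ^ (-ρ) = Ω00 + Ω10 t + R'(t)`. Letting `s → 0` gives `Ω00 = Δ00 ^ (-ρ)`. Subtracting this value
and dividing by `t`, the left side tends to the derivative of `x ↦ x ^ (-ρ)` at `Δ00` times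
`lim (A - Δ00) / t = Δ01 / Δ00`, which is the claimed value of `Ω10`. The argument for fixed `μ` is
`dulac_coeff_of_expansions`; only the undifferentiated flatness bound is used.
-/

open Topology Filter Set

/-- The statement at a fixed parameter, with the flatness of the remainders reduced to
`r = o(s ^ l)` and `r' = o(t)`. -/
lemma dulac_coeff_of_expansions {l a b w0 w1 : ℝ} (hl : 0 < l) (ha : 0 < a)
    {d g r r' : ℝ → ℝ}
    (hd : ∀ᶠ s in 𝓝[>] (0:ℝ), d s = s ^ l * (a + b * s ^ l + r s))
    (hgd : ∀ᶠ s in 𝓝[>] (0:ℝ), g (d s) = s)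
    (hg : ∀ᶠ t in 𝓝[>] (0:ℝ), g t = t ^ l⁻¹ * (w0 + w1 * t + r' t))
    (hr : Tendsto (fun s => r s / s ^ l) (𝓝[>] 0) (𝓝 0))
    (hr' : Tendsto (fun t => r' t / t) (𝓝[>] 0) (𝓝 0)) :
    w0 = a ^ (-l⁻¹) ∧ w1 = -l⁻¹ * a ^ (-(2 + l⁻¹)) * b := by
  have hpos : ∀ᶠ s in 𝓝[>] (0:ℝ), 0 < s := eventually_mem_nhdsWithin
  have hu : Tendsto (fun s : ℝ => s ^ l) (𝓝[>] 0) (𝓝 0) := by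
    have := (Real.continuousAt_rpow_const 0 l (Or.inr hl.le)).tendsto
    rw [Real.zero_rpow hl.ne'] at this
    exact this.mono_left nhdsWithin_le_nhds
  have hr0 : Tendsto r (𝓝[>] 0) (𝓝 0) := by
    have h := hr.mul hu
    rw [zero_mul] at h
    refine h.congr' ?_
    filter_upwards [hpos] with s hs
    exact div_mul_cancel₀ _ (Real.rpow_pos_of_pos hs l).ne'
  set A : ℝ → ℝ := fun s => a + b * s ^ l + r s with hA
  have hAlim : Tendsto A (𝓝[>] 0) (𝓝 a) := by
    have h := (((hu.const_mul b).const_add a).add hr0)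
    simpa using h
  have hApos : ∀ᶠ s in 𝓝[>] (0:ℝ), 0 < A s := hAlim.eventually (lt_mem_nhds ha)
  have hdpos : ∀ᶠ s in 𝓝[>] (0:ℝ), 0 < d s := by
    filter_upwards [hd, hpos, hApos] with s h1 h2 h3
    rw [h1]
    exact mul_pos (Real.rpow_pos_of_pos h2 l) h3
  have hd0 : Tendsto d (𝓝[>] 0) (𝓝[>] 0) := by
    refine tendsto_nhdsWithin_iff.2 ⟨?_, hdpos⟩
    have h := hu.mul hAlim
    rw [zero_mul] at h
    exact h.congr' (hd.mono fun s hs => hs.symm)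
  have hd0' : Tendsto d (𝓝[>] 0) (𝓝 0) := hd0.mono_right nhdsWithin_le_nhds
  have hq : Tendsto (fun s => r' (d s) / d s) (𝓝[>] 0) (𝓝 0) := hr'.comp hd0
  have key : ∀ᶠ s in 𝓝[>] (0:ℝ), A s ^ (-l⁻¹) = w0 + w1 * d s + r' (d s) := by
    filter_upwards [hd, hpos, hApos, hgd, hd0.eventually hg] with s h1 h2 h3 h4 h5
    have hul := Real.rpow_pos_of_pos h2 l
    have h6 : d s ^ l⁻¹ = s * A s ^ l⁻¹ := by
      rw [h1, Real.mul_rpow hul.le h3.le, ← Real.rpow_mul h2.le, mul_inv_cancel₀ hl.ne',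
        Real.rpow_one]
    rw [h4, h6] at h5
    have hAl := Real.rpow_pos_of_pos h3 l⁻¹
    rw [Real.rpow_neg h3.le]
    refine (eq_inv_of_mul_eq_one_left ?_).symm
    apply mul_left_cancel₀ h2.ne'
    linarith
  have hderiv : HasDerivAt (fun x : ℝ => x ^ (-l⁻¹)) (-l⁻¹ * a ^ (-l⁻¹ - 1)) a :=
    Real.hasDerivAt_rpow_const (Or.inl ha.ne')
  have hw0 : w0 = a ^ (-l⁻¹) := by
    have h1 : Tendsto (fun s => A s ^ (-l⁻¹)) (𝓝[>] 0) (𝓝 (a ^ (-l⁻¹))) :=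
      hderiv.continuousAt.tendsto.comp hAlim
    have h2 : Tendsto (fun s => w0 + w1 * d s + r' (d s) / d s * d s) (𝓝[>] 0) (𝓝 w0) := by
      simpa using ((hd0'.const_mul w1).const_add w0).add (hq.mul hd0')
    refine tendsto_nhds_unique h2 (h1.congr' ?_)
    filter_upwards [key, hdpos] with s h3 h4
    rw [h3, div_mul_cancel₀ _ h4.ne']
  refine ⟨hw0, ?_⟩
  -- `(A - a) / t` tends to `b / a`, since `A - a = u (b + r / u)` and `t = u A`.
  have hquot : Tendsto (fun s => (b + r s / s ^ l) / A s) (𝓝[>] 0) (𝓝 (b / a)) := by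
    have h := (hr.const_add b).div hAlim ha.ne'
    rw [add_zero] at h
    exact h
  have hsl : Tendsto (fun s => dslope (fun x : ℝ => x ^ (-l⁻¹)) a (A s)) (𝓝[>] 0)
      (𝓝 (-l⁻¹ * a ^ (-l⁻¹ - 1))) := by
    have h := (continuousAt_dslope_same.2 hderiv.differentiableAt).tendsto
    rw [dslope_same, hderiv.deriv] at h
    exact h.comp hAlim
  have h1 : Tendsto (fun s => w1 + r' (d s) / d s) (𝓝[>] 0) (𝓝 w1) := by
    simpa using hq.const_add w1
  have h2 := tendsto_nhds_unique h1 ((hquot.mul hsl).congr' ?_)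
  · rw [h2, show -(2 + l⁻¹) = (-l⁻¹ - 1) - 1 by ring, Real.rpow_sub_one ha.ne' (-l⁻¹ - 1)]
    field_simp
  · filter_upwards [hd, hpos, hApos, hdpos, key] with s g1 g2 g3 g4 g5
    have hul := Real.rpow_pos_of_pos g2 l
    have h3 := sub_smul_dslope (fun x : ℝ => x ^ (-l⁻¹)) a (A s)
    simp only [smul_eq_mul] at h3
    rw [g5, ← hw0] at h3
    have h4 : (b + r s / s ^ l) / A s = (A s - a) / d s := by
      have h5 : A s - a = s ^ l * (b + r s / s ^ l) := by
        rw [mul_add, mul_div_cancel₀ _ hul.ne']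
        simp only [hA]
        ring
      rw [h5, g1]
      exact (mul_div_mul_left _ _ hul.ne').symm
    rw [h4, div_mul_eq_mul_div, h3]
    field_simp
    ring

/-- The undifferentiated case of the flatness bound gives `ψ(s; μ) = o(s ^ p)` for each `p < L`,
with `μ` in a neighborhood of `μ0` that does not depend on `p`. -/
lemma MemF.exists_tendsto {N : ℕ} {K : ℕ∞} {L : ℝ} {U : Set (Fin N → ℝ)} {μ0 : Fin N → ℝ}
    {ψ : ℝ → (Fin N → ℝ) → ℝ} (h : MemF K L U μ0 ψ) :
    ∃ V ⊆ U, V ∈ 𝓝 μ0 ∧ ∀ μ ∈ V, ∀ p < L,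
      Tendsto (fun s => ψ s μ / s ^ p) (𝓝[>] 0) (𝓝 0) := by
  obtain ⟨V, hVU, hV, C, hC, s0, hs0, hb⟩ := h.2 0 (fun _ => 0) (by simp)
  have hm : mixedDeriv 0 (fun _ : Fin N => 0) ψ = ψ := by
    have : ∀ li : List (Fin N), li.foldr (fun i φ => (dMu i)^[0] φ) ψ = ψ := by
      intro li
      induction li with
      | nil => rfl
      | cons i li ih => exact ih
    exact this _
  rw [hm] at hb
  refine ⟨V, hVU, hV, fun μ hμ p hp => ?_⟩
  have hlim : Tendsto (fun s : ℝ => C * s ^ (L - p)) (𝓝[>] 0) (𝓝 0) := by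
    have h1 := (Real.continuousAt_rpow_const 0 (L - p) (Or.inr (sub_pos.2 hp).le)).tendsto
    rw [Real.zero_rpow (sub_pos.2 hp).ne'] at h1
    simpa using (h1.mono_left nhdsWithin_le_nhds).const_mul C
  refine squeeze_zero_norm' ?_ hlim
  filter_upwards [Ioo_mem_nhdsGT hs0] with s hs
  have hsp := Real.rpow_pos_of_pos hs.1 p
  have h2 := hb μ hμ s hs
  rw [Nat.cast_zero, sub_zero] at h2
  rw [Real.norm_eq_abs, abs_div, abs_of_pos hsp, Real.rpow_sub hs.1, ← mul_div_assoc]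
  gcongr

/-- Lemma 4.11: coefficients of the inverse of a Dulac map when λ⁰ < 1. -/
theorem dulac_inverse_coeff_lt_one {N : ℕ} (U : Set (Fin N → ℝ)) (hU : IsOpen U)
    (μ0 : Fin N → ℝ) (hμ0 : μ0 ∈ U)
    (lam Δ00 Δ01 Ω00 Ω10 : (Fin N → ℝ) → ℝ)
    (hlam : ContDiffOn ℝ (⊤ : ℕ∞) lam U) (hΔ00 : ContDiffOn ℝ (⊤ : ℕ∞) Δ00 U)
    (hΔ01 : ContDiffOn ℝ (⊤ : ℕ∞) Δ01 U) (hΩ00 : ContDiffOn ℝ (⊤ : ℕ∞) Ω00 U)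
    (hΩ10 : ContDiffOn ℝ (⊤ : ℕ∞) Ω10 U)
    (hlampos : ∀ μ ∈ U, 0 < lam μ) (hΔ00pos : ∀ μ ∈ U, 0 < Δ00 μ)
    (hlamlt : lam μ0 < 1)
    (D Dinv : ℝ → (Fin N → ℝ) → ℝ)
    (hDpos : ∃ s0 > 0, ∀ μ ∈ U, ∀ s ∈ Set.Ioo (0:ℝ) s0, 0 < D s μ)
    (hinv : ∃ s0 > 0, ∀ μ ∈ U, ∀ s ∈ Set.Ioo (0:ℝ) s0, Dinv (D s μ) μ = s)
    (hD : ∀ ℓ ∈ Set.Ioo (lam μ0) (min (2 * lam μ0) 1),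
      ∃ R : ℝ → (Fin N → ℝ) → ℝ, MemF (⊤ : ℕ∞) ℓ U μ0 R ∧
        ∃ s0 > 0, ∀ μ ∈ U, ∀ s ∈ Set.Ioo (0:ℝ) s0,
          D s μ = s ^ lam μ * (Δ00 μ + Δ01 μ * s ^ lam μ + R s μ))
    (hDinv : ∀ η ∈ Set.Ioo (1:ℝ) (min (lam μ0)⁻¹ 2),
      ∃ R' : ℝ → (Fin N → ℝ) → ℝ, MemF (⊤ : ℕ∞) η U μ0 R' ∧
        ∃ s0 > 0, ∀ μ ∈ U, ∀ s ∈ Set.Ioo (0:ℝ) s0,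
          Dinv s μ = s ^ (lam μ)⁻¹ * (Ω00 μ + Ω10 μ * s + R' s μ)) :
    ∃ V ⊆ U, V ∈ 𝓝 μ0 ∧ ∀ μ ∈ V,
      Ω00 μ = (Δ00 μ) ^ (-(lam μ)⁻¹) ∧
      Ω10 μ = -(lam μ)⁻¹ * (Δ00 μ) ^ (-(2 + (lam μ)⁻¹)) * Δ01 μ := by
  have hl0 := hlampos μ0 hμ0
  obtain ⟨ℓ, hℓ⟩ : (Set.Ioo (lam μ0) (min (2 * lam μ0) 1)).Nonempty :=
    Set.nonempty_Ioo.2 (lt_min (by linarith) hlamlt)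
  obtain ⟨η, hη⟩ : (Set.Ioo (1:ℝ) (min (lam μ0)⁻¹ 2)).Nonempty :=
    Set.nonempty_Ioo.2 (lt_min ((one_lt_inv₀ hl0).2 hlamlt) (by norm_num))
  obtain ⟨R, hR, s1, hs1, hDR⟩ := hD ℓ hℓ
  obtain ⟨R', hR', s2, hs2, hDR'⟩ := hDinv η hη
  obtain ⟨s3, hs3, hinv⟩ := hinv
  obtain ⟨V, hVU, hV, hRV⟩ := hR.exists_tendsto
  obtain ⟨V', -, hV', hRV'⟩ := hR'.exists_tendsto
  have hcont : ContinuousAt lam μ0 := hlam.continuousOn.continuousAt (hU.mem_nhds hμ0)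
  -- `ℓ` exceeds `λ(μ)` only near `μ0`, hence the third set in the intersection.
  refine ⟨V ∩ V' ∩ {μ | lam μ < ℓ}, fun μ hμ => hVU hμ.1.1,
    inter_mem (inter_mem hV hV') (hcont.eventually (gt_mem_nhds hℓ.1)), ?_⟩
  rintro μ ⟨⟨hμV, hμV'⟩, hμl⟩
  have hμU := hVU hμV
  refine dulac_coeff_of_expansions (d := fun s => D s μ) (g := fun t => Dinv t μ)
    (r := fun s => R s μ) (r' := fun t => R' t μ) (hlampos μ hμU) (hΔ00pos μ hμU)
    ?_ ?_ ?_ (hRV μ hμV _ hμl) ?_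
  · filter_upwards [Ioo_mem_nhdsGT hs1] with s hs using hDR μ hμU s hs
  · filter_upwards [Ioo_mem_nhdsGT hs3] with s hs using hinv μ hμU s hs
  · filter_upwards [Ioo_mem_nhdsGT hs2] with s hs using hDR' μ hμU s hs
  · simpa using hRV' μ hμV' 1 hη.1
end

section
/- Let U ⊆ ℝ^N be open, μ0 ∈ U, and let λ, Δ00, Δ10, Ω00, Ω01 ∈ C^∞(U) with λ > 0, Δ00 > 0 and λ(μ0) > 1; set ρ = 1/λ, λ^0 = λ(μ0), ρ^0 = 1/λ^0. Let D(s;μ) be a family of functions, defined and strictly positive for μ ∈ U and all sufficiently small s > 0, invertible with respect to s near s = 0 with inverse D^{-1}(·;μ). Assume that for every ℓ ∈ (1, min{λ^0, 2}) there is R ∈ 𝓕^∞_ℓ(μ0) with D(s;μ) = s^{λ(μ)}(Δ00(μ) + Δ10(μ)·s + R(s;μ)), and for every η ∈ (ρ^0, min{2ρ^0, 1}) there is R' ∈ 𝓕^∞_η(μ0) with D^{-1}(s;μ) = s^{ρ(μ)}(Ω00(μ) + Ω01(μ)·s^{ρ(μ)} + R'(s;μ)). Then, on a neighborhood of μ0,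 Ω00 = Δ00^{−ρ} and Ω01 = −ρ·Δ00^{−(1+2ρ)}·Δ10. -/
/-!
Fix `μ` near `μ0` and write `ρ = 1/λ`, `h(s) = Δ00 + Δ10 s + R(s)`. Since `D(s) = s^λ h(s)`, we have
`D(s)^ρ = s h(s)^ρ`, so dividing the identity `D⁻¹(D(s)) = s` by `s` gives
`1 = h(s)^ρ (Ω00 + Ω01 s h(s)^ρ + R'(D(s)))`.
Here `R(s) = O(s^ℓ)` with `ℓ > 1`, and `R'(D(s)) = O(s^(λη))` with `λη > 1` for `μ` close to `μ0`, so
both remainders are `o(s)` (`remainder_comp_tendsto` for the second). Letting `s → 0⁺` gives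
`Ω00 Δ00^ρ = 1`, and the first-order terms in `s` give the formula for `Ω01` (`coeff_of_expansion`).
-/

open Topology Filter Set

/-- Comparison of the terms of order `0` and `1` in `s` in the identity `D⁻¹(D(s)) / s = 1`; the
remainders `R` and `T` are `o(s)`. -/
lemma coeff_of_expansion {r a b p q : ℝ} (ha : 0 < a) {R T : ℝ → ℝ}
    (hR : Tendsto (fun s => R s / s) (𝓝[>] 0) (𝓝 0))
    (hT : Tendsto (fun s => T s / s) (𝓝[>] 0) (𝓝 0))
    (h : ∀ᶠ s in 𝓝[>] (0 : ℝ), 1 = (a + b * s + R s) ^ r *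
      (p + q * (s * (a + b * s + R s) ^ r) + T s)) :
    p = a ^ (-r) ∧ q = -r * a ^ (-(1 + 2 * r)) * b := by
  have hid : Tendsto (fun s : ℝ => s) (𝓝[>] 0) (𝓝 0) := nhdsWithin_le_nhds
  have hpos : ∀ᶠ s in 𝓝[>] (0 : ℝ), 0 < s := self_mem_nhdsWithin
  have hT0 : Tendsto T (𝓝[>] 0) (𝓝 0) := by
    have := hT.mul hid
    rw [mul_zero] at this
    refine this.congr' ?_
    filter_upwards [hpos] with s hs
    field_simp
  have hquot : Tendsto (fun s => ((a + b * s + R s) - a) / s) (𝓝[>] 0) (𝓝 b) := by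
    have := hR.const_add b
    rw [add_zero] at this
    refine this.congr' ?_
    filter_upwards [hpos] with s hs
    field_simp
    ring
  have hh : Tendsto (fun s => a + b * s + R s) (𝓝[>] 0) (𝓝 a) := by
    have := (hquot.mul hid).const_add a
    rw [mul_zero, add_zero] at this
    refine this.congr' ?_
    filter_upwards [hpos] with s hs
    field_simp
    ring
  have hd : HasDerivAt (fun x : ℝ => x ^ r) (r * a ^ (r - 1)) a :=
    Real.hasDerivAt_rpow_const (Or.inl ha.ne')
  have hg : Tendsto (fun s => (a + b * s + R s) ^ r) (𝓝[>] 0) (𝓝 (a ^ r)) :=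
    hd.continuousAt.tendsto.comp hh
  -- `dslope` extends the difference quotient of `x ↦ x ^ r` continuously to `a`, so no case
  -- distinction on `a + b * s + R s = a` is needed.
  have hgd : Tendsto (fun s => ((a + b * s + R s) ^ r - a ^ r) / s) (𝓝[>] 0)
      (𝓝 (r * a ^ (r - 1) * b)) := by
    have hc := (continuousAt_dslope_same.2 hd.differentiableAt).tendsto.comp hh
    rw [dslope_same, hd.deriv] at hc
    refine (hc.mul hquot).congr fun s => ?_
    have := sub_smul_dslope (fun x : ℝ => x ^ r) a (a + b * s + R s)
    simp only [smul_eq_mul] at this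
    rw [← this, Function.comp]
    ring
  have hpa : p * a ^ r = 1 := by
    have hl := hg.mul (((hid.mul hg).const_mul q |>.const_add p).add hT0)
    have := tendsto_nhds_unique (tendsto_const_nhds.congr' h) hl
    linarith
  have har : 0 < a ^ r := Real.rpow_pos_of_pos ha r
  have hp : p = (a ^ r)⁻¹ := eq_inv_of_mul_eq_one_left hpa
  refine ⟨by rw [Real.rpow_neg ha.le, hp], ?_⟩
  -- The limit of `(1 - p * g s) / s` with `g s = (a + b * s + R s) ^ r`, computed in two ways.
  have h1 := hgd.const_mul (-p)
  have h2 := hg.mul ((hg.const_mul q).add hT)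
  have heq := tendsto_nhds_unique (h1.congr' (f₂ := fun s => (a + b * s + R s) ^ r *
      (q * (a + b * s + R s) ^ r + T s / s)) (by
    filter_upwards [hpos, h] with s hs h
    generalize (a + b * s + R s) ^ r = g at h ⊢
    field_simp
    linear_combination h + hpa)) h2
  have e1 : a ^ (r - 1) = a ^ r / a := Real.rpow_sub_one ha.ne' r
  have e2 : a ^ (-(1 + 2 * r)) = (a * (a ^ r * a ^ r))⁻¹ := by
    rw [Real.rpow_neg ha.le, Real.rpow_add ha, Real.rpow_one, two_mul, Real.rpow_add ha]
  rw [e1, hp] at heq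
  rw [e2]
  field_simp at heq ⊢
  linarith

/-- If `D(s) = s^l h(s)` with `h` tending to `a > 0` as `s → 0⁺` and `R' = O(y^η)` with `l η > 1`, then
`R' ∘ D = o(s)`. -/
lemma remainder_comp_tendsto {l η a C : ℝ} (ha : 0 < a) (hl : 1 < η * l) {h R' : ℝ → ℝ}
    (hh : Tendsto h (𝓝[>] 0) (𝓝 a))
    (hR : ∀ᶠ s in 𝓝[>] (0 : ℝ), |R' (s ^ l * h s)| ≤ C * (s ^ l * h s) ^ η) :
    Tendsto (fun s => R' (s ^ l * h s) / s) (𝓝[>] 0) (𝓝 0) := by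
  have hid : Tendsto (fun s : ℝ => s) (𝓝[>] 0) (𝓝 0) := nhdsWithin_le_nhds
  have hpow : Tendsto (fun s : ℝ => s ^ (η * l - 1)) (𝓝[>] 0) (𝓝 0) := by
    have := hid.rpow_const (p := η * l - 1) (Or.inr (by linarith))
    rwa [Real.zero_rpow (by linarith)] at this
  have hb := (hpow.mul (hh.rpow_const (p := η) (Or.inl ha.ne'))).const_mul C
  rw [zero_mul, mul_zero] at hb
  refine squeeze_zero_norm' ?_ hb
  filter_upwards [self_mem_nhdsWithin, hR, hh.eventually_const_lt ha] with s hs hR hhs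
  have hs : 0 < s := hs
  rw [Real.mul_rpow (by positivity) hhs.le, ← Real.rpow_mul hs.le] at hR
  rw [Real.norm_eq_abs, abs_div, abs_of_pos hs, Real.rpow_sub_one hs.ne', div_le_iff₀ hs,
    mul_comm η l]
  refine hR.trans_eq ?_
  generalize s ^ (l * η) = x
  field_simp

/-- Lemma 4.12: coefficients of the inverse of a Dulac map when λ⁰ > 1. -/
theorem dulac_inverse_coeff_gt_one {N : ℕ} (U : Set (Fin N → ℝ)) (hU : IsOpen U)
    (μ0 : Fin N → ℝ) (hμ0 : μ0 ∈ U)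
    (lam Δ00 Δ10 Ω00 Ω01 : (Fin N → ℝ) → ℝ)
    (hlam : ContDiffOn ℝ (⊤ : ℕ∞) lam U) (hΔ00 : ContDiffOn ℝ (⊤ : ℕ∞) Δ00 U)
    (hΔ10 : ContDiffOn ℝ (⊤ : ℕ∞) Δ10 U) (hΩ00 : ContDiffOn ℝ (⊤ : ℕ∞) Ω00 U)
    (hΩ01 : ContDiffOn ℝ (⊤ : ℕ∞) Ω01 U)
    (hlampos : ∀ μ ∈ U, 0 < lam μ) (hΔ00pos : ∀ μ ∈ U, 0 < Δ00 μ)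
    (hlamgt : 1 < lam μ0)
    (D Dinv : ℝ → (Fin N → ℝ) → ℝ)
    (hDpos : ∃ s0 > 0, ∀ μ ∈ U, ∀ s ∈ Set.Ioo (0:ℝ) s0, 0 < D s μ)
    (hinv : ∃ s0 > 0, ∀ μ ∈ U, ∀ s ∈ Set.Ioo (0:ℝ) s0, Dinv (D s μ) μ = s)
    (hD : ∀ ℓ ∈ Set.Ioo (1:ℝ) (min (lam μ0) 2),
      ∃ R : ℝ → (Fin N → ℝ) → ℝ, MemF (⊤ : ℕ∞) ℓ U μ0 R ∧
        ∃ s0 > 0, ∀ μ ∈ U, ∀ s ∈ Set.Ioo (0:ℝ) s0,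
          D s μ = s ^ lam μ * (Δ00 μ + Δ10 μ * s + R s μ))
    (hDinv : ∀ η ∈ Set.Ioo ((lam μ0)⁻¹) (min (2 * (lam μ0)⁻¹) 1),
      ∃ R' : ℝ → (Fin N → ℝ) → ℝ, MemF (⊤ : ℕ∞) η U μ0 R' ∧
        ∃ s0 > 0, ∀ μ ∈ U, ∀ s ∈ Set.Ioo (0:ℝ) s0,
          Dinv s μ = s ^ (lam μ)⁻¹ * (Ω00 μ + Ω01 μ * s ^ (lam μ)⁻¹ + R' s μ)) :
    ∃ V ⊆ U, V ∈ 𝓝 μ0 ∧ ∀ μ ∈ V,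
      Ω00 μ = (Δ00 μ) ^ (-(lam μ)⁻¹) ∧
      Ω01 μ = -(lam μ)⁻¹ * (Δ00 μ) ^ (-(1 + 2 * (lam μ)⁻¹)) * Δ10 μ := by
  obtain ⟨ℓ, hℓ⟩ : (Set.Ioo (1:ℝ) (min (lam μ0) 2)).Nonempty :=
    nonempty_Ioo.2 (lt_min hlamgt one_lt_two)
  have hl0 : 0 < lam μ0 := by linarith
  obtain ⟨η, hη⟩ : (Set.Ioo ((lam μ0)⁻¹) (min (2 * (lam μ0)⁻¹) 1)).Nonempty :=
    nonempty_Ioo.2 (lt_min (by have := inv_pos.2 hl0; linarith) (inv_lt_one_of_one_lt₀ hlamgt))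
  obtain ⟨R, ⟨-, hR⟩, s1, hs1, hD⟩ := hD ℓ hℓ
  obtain ⟨R', ⟨-, hR'⟩, s2, hs2, hDinv⟩ := hDinv η hη
  obtain ⟨V1, hV1U, hV1, C1, hC1, t1, ht1, hR⟩ := hR 0 0 le_top
  obtain ⟨V2, -, hV2, C2, hC2, t2, ht2, hR'⟩ := hR' 0 0 le_top
  obtain ⟨s3, hs3, hDpos⟩ := hDpos
  obtain ⟨s4, hs4, hinv⟩ := hinv
  -- For the zero multi-index the mixed derivative is the function itself.
  have hmix : ∀ ψ : ℝ → (Fin N → ℝ) → ℝ, mixedDeriv 0 0 ψ = ψ := fun ψ => by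
    simp [mixedDeriv]
  simp only [hmix, Nat.cast_zero, sub_zero] at hR hR'
  have hcont : ContinuousAt lam μ0 := hlam.continuousOn.continuousAt (hU.mem_nhds hμ0)
  have hηl : ∀ᶠ μ in 𝓝 μ0, 1 < η * lam μ :=
    (hcont.tendsto.const_mul η).eventually_const_lt ((inv_lt_iff_one_lt_mul₀ hl0).1 hη.1)
  refine ⟨V1 ∩ V2 ∩ {μ | 1 < η * lam μ}, fun μ hμ => hV1U hμ.1.1,
    inter_mem (inter_mem hV1 hV2) hηl, ?_⟩
  rintro μ ⟨⟨hμ1, hμ2⟩, hμl⟩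
  have hμU := hV1U hμ1
  have hl := hlampos μ hμU
  have ha := hΔ00pos μ hμU
  have hid : Tendsto (fun s : ℝ => s) (𝓝[>] 0) (𝓝 0) := nhdsWithin_le_nhds
  have hIoo : ∀ {t : ℝ}, 0 < t → ∀ᶠ s in 𝓝[>] (0 : ℝ), s ∈ Set.Ioo 0 t :=
    fun ht => Ioo_mem_nhdsGT ht
  have hRo : Tendsto (fun s => R s μ / s) (𝓝[>] 0) (𝓝 0) := by
    have hb := (hid.rpow_const (p := ℓ - 1) (Or.inr (by linarith [hℓ.1]))).const_mul C1
    rw [Real.zero_rpow (by linarith [hℓ.1]), mul_zero] at hb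
    refine squeeze_zero_norm' ?_ hb
    filter_upwards [hIoo ht1] with s hs
    rw [Real.norm_eq_abs, abs_div, abs_of_pos hs.1, Real.rpow_sub_one hs.1.ne', ← mul_div_assoc]
    exact div_le_div_of_nonneg_right (hR μ hμ1 s hs) hs.1.le
  have hh : Tendsto (fun s => Δ00 μ + Δ10 μ * s + R s μ) (𝓝[>] 0) (𝓝 (Δ00 μ)) := by
    have := ((hid.const_mul (Δ10 μ)).const_add (Δ00 μ)).add (hRo.mul hid)
    rw [mul_zero, mul_zero, add_zero, add_zero] at this
    refine this.congr' ?_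
    filter_upwards [hIoo one_pos] with s hs
    have := hs.1.ne'
    field_simp
  have hDto : Tendsto (fun s => D s μ) (𝓝[>] 0) (𝓝[>] 0) := by
    refine tendsto_nhdsWithin_iff.2 ⟨?_, ?_⟩
    · have := (hid.rpow_const (p := lam μ) (Or.inr hl.le)).mul hh
      rw [Real.zero_rpow hl.ne', zero_mul] at this
      refine this.congr' ?_
      filter_upwards [hIoo hs1] with s hs
      rw [hD μ hμU s hs]
    · filter_upwards [hIoo hs3] with s hs using hDpos μ hμU s hs
  refine coeff_of_expansion ha hRo (remainder_comp_tendsto (C := C2) (R' := fun y => R' y μ)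
    ha hμl hh ?_) ?_
  · filter_upwards [hIoo hs1, hDto.eventually (hIoo ht2)] with s hs hDs
    rw [hD μ hμU s hs] at hDs
    exact hR' μ hμ2 _ hDs
  · filter_upwards [hIoo hs1, hIoo hs4, hDto.eventually (hIoo hs2), hh.eventually_const_lt ha]
      with s hs hs' hDs hhs
    have e := hDinv μ hμU _ hDs
    rw [hinv μ hμU s hs', hD μ hμU s hs, Real.mul_rpow (Real.rpow_nonneg hs.1.le _) hhs.le,
      Real.rpow_rpow_inv hs.1.le hl.ne'] at e
    refine mul_left_cancel₀ hs.1.ne' ?_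
    linear_combination e
end

section
/- Let U ⊆ ℝ^N be open, μ0 ∈ U, and let r, A, Λ, 𝒜 ∈ C^∞(U) with r > 0, A > 0, Λ > 0, r(μ0) = 1, A(μ0) = 1, 0 < Λ(μ0) < 1 and 𝒜(μ0) ≠ 0. Let ℓ ∈ (Λ(μ0), min{2Λ(μ0), 1}), let R ∈ 𝓕^∞_ℓ(μ0), and define 𝒟(s;μ) = s^{r(μ)}·(A(μ) − s^{1−r(μ)} + 𝒜(μ)·s^{Λ(μ)} + R(s;μ)). Then there exist a neighborhood V ⊆ U of μ0 and ε > 0 such that for every μ ∈ V the function s ↦ 𝒟(s;μ) has at most two zeros in the interval (0, ε). -/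
/-!
Dividing by `s ^ r > 0`, the zeros of the displacement map are those of
`f s = A - s ^ α + 𝒜 * s ^ Λ + R s` with `α = 1 - r`. Three zeros of `f` would give, by Rolle, two
zeros of `f'`, hence of
`g s = s ^ (1 - α) * f' s = -α + 𝒜 * Λ * s ^ (Λ - α) + s ^ (1 - α) * R' s`,
hence a zero of `g'`. But
`s ^ (1 + α - Λ) * g' s = 𝒜 * Λ * (Λ - α) + (1 - α) * s ^ (1 - Λ) * R' s + s ^ (2 - Λ) * R'' s`,
where the first term tends to `𝒜 μ0 * Λ μ0 ^ 2 ≠ 0` as `μ → μ0`, while flatness of `R` bounds the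
other two by a constant times `s ^ (ℓ - Λ)`, which is uniformly small for small `s` since
`Λ μ0 < ℓ`. This derivation-division argument is `card_zeros_le_two`; the theorem supplies the
uniform estimates.
-/

open Topology Filter Set

/-- Two Rolle steps, with a division by `s ^ (α - 1)` in between. The hypothesis `hsmall` says that
the last derivative, normalised by `s ^ (1 + α - l)`, does not vanish. -/
lemma card_zeros_le_two (a α k l ε : ℝ) (ρ : ℝ → ℝ)
    (hρ : ContDiffOn ℝ 2 ρ (Ioo 0 ε))
    (hsmall : ∀ s ∈ Ioo (0 : ℝ) ε,
      |(1 - α) * s ^ (1 - l) * deriv ρ s + s ^ (2 - l) * deriv (deriv ρ) s|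
        < |k * l * (l - α)|)
    (S : Finset ℝ)
    (hS : ∀ s ∈ S, s ∈ Ioo (0 : ℝ) ε ∧ a - s ^ α + k * s ^ l + ρ s = 0) :
    S.card ≤ 2 := by
  have hρ1 : ∀ s ∈ Ioo (0 : ℝ) ε, HasDerivAt ρ (deriv ρ s) s := fun s hs =>
    ((hρ.contDiffAt (Ioo_mem_nhds hs.1 hs.2)).differentiableAt (by norm_num)).hasDerivAt
  have hρ2 : ∀ s ∈ Ioo (0 : ℝ) ε, HasDerivAt (deriv ρ) (deriv (deriv ρ) s) s := fun s hs => by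
    have h1 : ContDiffOn ℝ 1 (deriv ρ) (Ioo 0 ε) :=
      hρ.deriv_of_isOpen isOpen_Ioo (by norm_num)
    exact ((h1.contDiffAt (Ioo_mem_nhds hs.1 hs.2)).differentiableAt (by norm_num)).hasDerivAt
  set f : ℝ → ℝ := fun s => a - s ^ α + k * s ^ l + ρ s with hf
  set f' : ℝ → ℝ := fun s => -(α * s ^ (α - 1)) + k * (l * s ^ (l - 1)) + deriv ρ s with hf'
  have hfd : ∀ s ∈ Ioo (0 : ℝ) ε, HasDerivAt f (f' s) s := fun s hs => by
    have h1 := Real.hasDerivAt_rpow_const (x := s) (p := α) (Or.inl hs.1.ne')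
    have h2 := Real.hasDerivAt_rpow_const (x := s) (p := l) (Or.inl hs.1.ne')
    exact ((h1.const_sub a).add (h2.const_mul k)).add (hρ1 s hs)
  set g : ℝ → ℝ := fun s => -α + k * l * s ^ (l - α) + s ^ (1 - α) * deriv ρ s with hg
  set g' : ℝ → ℝ := fun s => k * l * ((l - α) * s ^ (l - α - 1)) +
    ((1 - α) * s ^ (1 - α - 1) * deriv ρ s + s ^ (1 - α) * deriv (deriv ρ) s) with hg'
  have hgd : ∀ s ∈ Ioo (0 : ℝ) ε, HasDerivAt g (g' s) s := fun s hs => by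
    have h1 := Real.hasDerivAt_rpow_const (x := s) (p := l - α) (Or.inl hs.1.ne')
    have h2 := Real.hasDerivAt_rpow_const (x := s) (p := 1 - α) (Or.inl hs.1.ne')
    exact ((h1.const_mul (k * l)).const_add (-α)).add (h2.mul (hρ2 s hs))
  have hgf : ∀ s ∈ Ioo (0 : ℝ) ε, g s = s ^ (1 - α) * f' s := fun s hs => by
    have e1 : s ^ (1 - α) * s ^ (α - 1) = 1 := by
      rw [← Real.rpow_add hs.1]; simp
    have e2 : s ^ (1 - α) * s ^ (l - 1) = s ^ (l - α) := by
      rw [← Real.rpow_add hs.1]; congr 1; ring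
    simp only [hg, hf', ← e2]
    linear_combination α * e1
  have hg'ne : ∀ s ∈ Ioo (0 : ℝ) ε, g' s ≠ 0 := fun s hs h0 => by
    have e1 : s ^ (1 + α - l) * s ^ (l - α - 1) = 1 := by
      rw [← Real.rpow_add hs.1]; ring_nf; simp
    have e2 : s ^ (1 + α - l) * s ^ (1 - α - 1) = s ^ (1 - l) := by
      rw [← Real.rpow_add hs.1]; congr 1; ring
    have e3 : s ^ (1 + α - l) * s ^ (1 - α) = s ^ (2 - l) := by
      rw [← Real.rpow_add hs.1]; congr 1; ring
    have key : k * l * (l - α) +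
        ((1 - α) * s ^ (1 - l) * deriv ρ s + s ^ (2 - l) * deriv (deriv ρ) s) = 0 := by
      simp only [hg'] at h0
      rw [← e2, ← e3]
      linear_combination s ^ (1 + α - l) * h0 - k * l * (l - α) * e1
    have h := hsmall s hs
    rw [eq_neg_of_add_eq_zero_right key, abs_neg] at h
    exact lt_irrefl _ h
  have rolle : ∀ (φ φ' : ℝ → ℝ), (∀ s ∈ Ioo (0 : ℝ) ε, HasDerivAt φ (φ' s) s) →
      ∀ x ∈ Ioo (0 : ℝ) ε, ∀ y ∈ Ioo (0 : ℝ) ε, x < y → φ x = 0 → φ y = 0 →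
      ∃ z ∈ Ioo x y, φ' z = 0 := by
    intro φ φ' hφ x hx y hy hxy h1 h2
    have hsub : Icc x y ⊆ Ioo (0 : ℝ) ε := fun t ht =>
      ⟨hx.1.trans_le ht.1, ht.2.trans_lt hy.2⟩
    exact exists_hasDerivAt_eq_zero hxy
      (fun t ht => (hφ t (hsub ht)).continuousAt.continuousWithinAt) (h1.trans h2.symm)
      (fun t ht => hφ t (hsub (Ioo_subset_Icc_self ht)))
  by_contra! hcard
  let e := S.orderEmbOfCardLe (k := 3) hcard
  have he : ∀ i, e i ∈ S := fun i => S.orderEmbOfCardLe_mem hcard i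
  have h01 : e 0 < e 1 := e.strictMono (by decide)
  have h12 : e 1 < e 2 := e.strictMono (by decide)
  have hI := fun i => (hS _ (he i)).1
  obtain ⟨u, hu, hu0⟩ := rolle f f' hfd _ (hI 0) _ (hI 1) h01 (hS _ (he 0)).2 (hS _ (he 1)).2
  obtain ⟨v, hv, hv0⟩ := rolle f f' hfd _ (hI 1) _ (hI 2) h12 (hS _ (he 1)).2 (hS _ (he 2)).2
  have huI : u ∈ Ioo (0 : ℝ) ε := ⟨(hI 0).1.trans hu.1, hu.2.trans (hI 1).2⟩
  have hvI : v ∈ Ioo (0 : ℝ) ε := ⟨(hI 1).1.trans hv.1, hv.2.trans (hI 2).2⟩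
  obtain ⟨w, hw, hw0⟩ := rolle g g' hgd u huI v hvI (hu.2.trans hv.1)
    (by rw [hgf u huI, hu0, mul_zero]) (by rw [hgf v hvI, hv0, mul_zero])
  exact hg'ne w ⟨huI.1.trans hw.1, hw.2.trans hvI.2⟩ hw0

/-- With no differentiation in `μ`, the mixed derivative is an iterated `s`-derivative. -/
lemma mixedDeriv_zero_s19 {N : ℕ} (n : ℕ) (ψ : ℝ → (Fin N → ℝ) → ℝ) :
    mixedDeriv n 0 ψ = (dS (N := N))^[n] ψ := by
  simp [mixedDeriv]

/-- From the proof of Theorem B(a): two zeros at most for the displacement map. -/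
theorem displacement_at_most_two_zeros {N : ℕ} (U : Set (Fin N → ℝ)) (hU : IsOpen U)
    (μ0 : Fin N → ℝ) (hμ0 : μ0 ∈ U)
    (r A Λ 𝒜 : (Fin N → ℝ) → ℝ)
    (hr : ContDiffOn ℝ (⊤ : ℕ∞) r U) (hA : ContDiffOn ℝ (⊤ : ℕ∞) A U)
    (hΛ : ContDiffOn ℝ (⊤ : ℕ∞) Λ U) (h𝒜 : ContDiffOn ℝ (⊤ : ℕ∞) 𝒜 U)
    (hrpos : ∀ μ ∈ U, 0 < r μ) (hApos : ∀ μ ∈ U, 0 < A μ)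
    (hΛpos : ∀ μ ∈ U, 0 < Λ μ)
    (hr0 : r μ0 = 1) (hA0 : A μ0 = 1)
    (hΛ0 : 0 < Λ μ0 ∧ Λ μ0 < 1) (h𝒜0 : 𝒜 μ0 ≠ 0)
    (ℓ : ℝ) (hℓ : ℓ ∈ Set.Ioo (Λ μ0) (min (2 * Λ μ0) 1))
    (R : ℝ → (Fin N → ℝ) → ℝ) (hR : MemF (⊤ : ℕ∞) ℓ U μ0 R) :
    ∃ V ⊆ U, V ∈ 𝓝 μ0 ∧ ∃ ε > 0, ∀ μ ∈ V,
      ∀ S : Finset ℝ,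
        (∀ s ∈ S, s ∈ Set.Ioo (0:ℝ) ε ∧
          s ^ r μ * (A μ - s ^ (1 - r μ) + 𝒜 μ * s ^ Λ μ + R s μ) = 0) →
        S.card ≤ 2 := by
  obtain ⟨⟨ε₀, hε₀, hRsm⟩, hRb⟩ := hR
  obtain ⟨V₁, -, hV₁, C₁, hC₁, s₁, hs₁, hb₁⟩ := hRb 1 0 le_top
  obtain ⟨V₂, -, hV₂, C₂, hC₂, s₂, hs₂, hb₂⟩ := hRb 2 0 le_top
  simp only [mixedDeriv_zero_s19] at hb₁ hb₂
  have hUn : U ∈ 𝓝 μ0 := hU.mem_nhds hμ0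
  have cr : ContinuousAt r μ0 := hr.continuousOn.continuousAt hUn
  have cΛ : ContinuousAt Λ μ0 := hΛ.continuousOn.continuousAt hUn
  have c𝒜 : ContinuousAt 𝒜 μ0 := h𝒜.continuousOn.continuousAt hUn
  have hΛℓ : Λ μ0 < ℓ := hℓ.1
  set δ := (ℓ - Λ μ0) / 2 with hδ
  have hδpos : 0 < δ := by rw [hδ]; linarith
  set c := |𝒜 μ0 * Λ μ0 * Λ μ0| / 2 with hc
  have hbig : 0 < |𝒜 μ0 * Λ μ0 * Λ μ0| :=
    abs_pos.2 (mul_ne_zero (mul_ne_zero h𝒜0 hΛ0.1.ne') hΛ0.1.ne')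
  have hcpos : 0 < c := by rw [hc]; linarith
  have hVc : ∀ᶠ μ in 𝓝 μ0, c < |𝒜 μ * Λ μ * (Λ μ - (1 - r μ))| := by
    have hcont : ContinuousAt (fun μ => |𝒜 μ * Λ μ * (Λ μ - (1 - r μ))|) μ0 :=
      ((c𝒜.mul cΛ).mul (cΛ.sub (continuousAt_const.sub cr))).abs
    refine hcont.eventually (lt_mem_nhds ?_)
    simp only [hr0, sub_self, sub_zero]
    rw [hc]; linarith
  have hVΛ : ∀ᶠ μ in 𝓝 μ0, Λ μ < ℓ - δ :=
    cΛ.eventually (gt_mem_nhds (by rw [hδ]; linarith))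
  have hVr : ∀ᶠ μ in 𝓝 μ0, r μ < 2 := cr.eventually (gt_mem_nhds (by rw [hr0]; norm_num))
  have hsmall : ∀ᶠ s in 𝓝[>] (0 : ℝ), (2 * C₁ + C₂) * s ^ δ < c := by
    have hcont : ContinuousAt (fun s : ℝ => (2 * C₁ + C₂) * s ^ δ) 0 :=
      (Real.continuousAt_rpow_const 0 δ (Or.inr hδpos.le)).const_mul _
    refine (hcont.eventually (gt_mem_nhds ?_)).filter_mono nhdsWithin_le_nhds
    simp [Real.zero_rpow hδpos.ne', hcpos]
  obtain ⟨ε₁, hε₁, hε₁c⟩ := mem_nhdsGT_iff_exists_Ioo_subset.1 hsmall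
  refine ⟨U ∩ (V₁ ∩ V₂ ∩ {μ | c < |𝒜 μ * Λ μ * (Λ μ - (1 - r μ))| ∧ Λ μ < ℓ - δ ∧ r μ < 2}),
    inter_subset_left, inter_mem hUn (inter_mem (inter_mem hV₁ hV₂) (hVc.and (hVΛ.and hVr))),
    min (min (min ε₀ ε₁) (min s₁ s₂)) 1,
    lt_min (lt_min (lt_min hε₀ hε₁) (lt_min hs₁ hs₂)) one_pos, ?_⟩
  rintro μ ⟨hμU, ⟨hμ1, hμ2⟩, hμc, hμΛ, hμr⟩ S hS
  refine card_zeros_le_two (A μ) (1 - r μ) (𝒜 μ) (Λ μ) (min (min (min ε₀ ε₁) (min s₁ s₂)) 1)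
    (fun s => R s μ) ?_ ?_ S ?_
  · refine (hRsm.of_le (m := 2) (WithTop.coe_le_coe.2 (le_top : (2 : ℕ∞) ≤ ⊤))).comp
      (f := fun s : ℝ => (s, μ)) (contDiff_id.prodMk contDiff_const).contDiffOn ?_
    intro s hs
    simp only [mem_Ioo, lt_min_iff] at hs
    exact ⟨⟨hs.1, hs.2.1.1.1⟩, hμU⟩
  · intro s hs
    simp only [mem_Ioo, lt_min_iff] at hs
    obtain ⟨hs0, ⟨⟨-, hsε₁⟩, hss₁, hss₂⟩, hs1⟩ := hs
    have b1 : |deriv (fun t => R t μ) s| ≤ C₁ * s ^ (ℓ - 1) := by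
      simpa [dS] using hb₁ μ hμ1 s ⟨hs0, hss₁⟩
    have b2 : |deriv (deriv fun t => R t μ) s| ≤ C₂ * s ^ (ℓ - 2) := by
      simpa [dS] using hb₂ μ hμ2 s ⟨hs0, hss₂⟩
    have e1 : s ^ (1 - Λ μ) * s ^ (ℓ - 1) = s ^ (ℓ - Λ μ) := by
      rw [← Real.rpow_add hs0]; congr 1; ring
    have e2 : s ^ (2 - Λ μ) * s ^ (ℓ - 2) = s ^ (ℓ - Λ μ) := by
      rw [← Real.rpow_add hs0]; congr 1; ring
    have hrμ := hrpos μ hμU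
    have p1 : 0 < s ^ (1 - Λ μ) := Real.rpow_pos_of_pos hs0 _
    have p2 : 0 < s ^ (2 - Λ μ) := Real.rpow_pos_of_pos hs0 _
    have hpow : s ^ (ℓ - Λ μ) ≤ s ^ δ :=
      Real.rpow_le_rpow_of_exponent_ge hs0 hs1.le (by linarith)
    calc |(1 - (1 - r μ)) * s ^ (1 - Λ μ) * deriv (fun t => R t μ) s
          + s ^ (2 - Λ μ) * deriv (deriv fun t => R t μ) s|
        ≤ r μ * s ^ (1 - Λ μ) * |deriv (fun t => R t μ) s|
          + s ^ (2 - Λ μ) * |deriv (deriv fun t => R t μ) s| := by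
          refine (abs_add_le _ _).trans_eq ?_
          rw [abs_mul, abs_mul, abs_mul, sub_sub_cancel, abs_of_pos hrμ, abs_of_pos p1,
            abs_of_pos p2]
      _ ≤ 2 * s ^ (1 - Λ μ) * (C₁ * s ^ (ℓ - 1)) + s ^ (2 - Λ μ) * (C₂ * s ^ (ℓ - 2)) := by
          gcongr
      _ = (2 * C₁ + C₂) * s ^ (ℓ - Λ μ) := by
          linear_combination 2 * C₁ * e1 + C₂ * e2
      _ ≤ (2 * C₁ + C₂) * s ^ δ := by gcongr
      _ < c := hε₁c ⟨hs0, hsε₁⟩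
      _ < _ := hμc
  · intro s hs
    obtain ⟨hsI, h0⟩ := hS s hs
    exact ⟨hsI, (mul_eq_zero.1 h0).resolve_left (Real.rpow_pos_of_pos hsI.1 _).ne'⟩
end
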